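/- arXiv:2409.10087 — 5 statements merged into one kernel-verified Lean document; each statement's English description precedes it below -/
import Mathlib

section
/- Let n ≥ 1 and let K : T → M_n(ℝ) be continuous on the triangle T = {(x,y) ∈ [0,1]² : x ≤ y}. Then there exists a continuous L : T → M_n(ℝ) such that for every continuous u : [0,1] → ℝⁿ, defining (Tu)(x) = u(x) + ∫_x^1 K(x,y) u(y) dy, one has u(x) = (Tu)(x) + ∫_x^1 L(x,y) (Tu)(y) dy for all x ∈ [0,1]. In particular, the map u ↦ Tu is a linear bijection of C([0,1], ℝⁿ) onto itself. -/
open Matrix Set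

/-!
The map `T = volterraTransform b K` is `1 + 𝐊` for the integral operator `𝐊` with kernel `K`.
Since Volterra operators compose according to `kernelComp` (Fubini on a triangle), `1 + 𝐋` is a
left inverse of `T` as soon as `L + K + kernelComp L K = 0`. Such an `L` is the Neumann series of
`-K`: the `(n + 1)`-st iterated kernel is bounded by `M ^ (n + 1) * |y - x| ^ n / n!` where `K` is
bounded by `M`, so the series converges locally uniformly. As `L` is again a continuous kernel, it
has a left inverse too, and therefore `1 + 𝐋` inverts `T` on both sides. Kernels and functions
given on the triangle and on `[a, b]` only are first extended continuously to the plane and to `ℝ`.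
-/

open MeasureTheory intervalIntegral Function
open scoped Nat

theorem continuous_intervalIntegral_of_continuous {X E : Type*} [TopologicalSpace X]
    [NormedAddCommGroup E] [NormedSpace ℝ E] {f : X → ℝ → E} (hf : Continuous (uncurry f))
    {a b : X → ℝ} (ha : Continuous a) (hb : Continuous b) :
    Continuous fun p => ∫ z in a p..b p, f p z := by
  have hint (p : X) (c d : ℝ) : IntervalIntegrable (f p) volume c d :=
    hf.uncurry_left p |>.intervalIntegrable c d
  have hsub (p : X) : ∫ z in a p..b p, f p z
      = (∫ z in (0 : ℝ)..b p, f p z) - ∫ z in (0 : ℝ)..a p, f p z :=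
    (integral_interval_sub_left (hint p _ _) (hint p _ _)).symm
  simp only [hsub]
  exact (continuous_parametric_intervalIntegral_of_continuous hf hb).sub
    (continuous_parametric_intervalIntegral_of_continuous hf ha)

theorem norm_integral_le_of_norm_le_pow {E : Type*} [NormedAddCommGroup E] [NormedSpace ℝ E]
    {f : ℝ → E} {x y C : ℝ} {n : ℕ} (hC : 0 ≤ C) (hf : ∀ z ∈ uIoc x y, ‖f z‖ ≤ C * |z - x| ^ n) :
    ‖∫ z in x..y, f z‖ ≤ C * (|y - x| ^ (n + 1) / (n + 1)) :=
  calc ‖∫ z in x..y, f z‖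
      ≤ |∫ z in x..y, C * |z - x| ^ n| :=
        norm_integral_le_abs_of_norm_le (ae_restrict_of_forall_mem measurableSet_uIoc hf)
          (Continuous.intervalIntegrable (by fun_prop) _ _)
    _ = C * (|y - x| ^ (n + 1) / (n + 1)) := by
        rw [intervalIntegral.integral_const_mul, abs_mul, abs_intervalIntegral_eq,
          integral_pow_abs_sub_uIoc, abs_of_nonneg hC, abs_of_nonneg (by positivity)]

section Fubini

variable {E : Type*} [NormedAddCommGroup E] [NormedSpace ℝ E] {h : ℝ → ℝ → E} {a b : ℝ}

theorem integral_triangle_swap_of_le (hh : Continuous (uncurry h)) (hab : a ≤ b) :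
    ∫ y in a..b, ∫ z in y..b, h y z = ∫ z in a..b, ∫ y in a..z, h y z := by
  let f (y z : ℝ) : E := {p : ℝ × ℝ | p.1 < p.2}.indicator (uncurry h) (y, z)
  have hf : IntegrableOn (uncurry f) (uIoc a b ×ˢ uIoc a b) :=
    (hh.continuousOn.integrableOn_compact (isCompact_uIcc.prod isCompact_uIcc)).mono_set
      (prod_mono uIoc_subset_uIcc uIoc_subset_uIcc) |>.indicator
      (measurableSet_lt measurable_fst measurable_snd)
  have hleft {y : ℝ} (hy : y ∈ Ioo a b) : ∫ z in y..b, h y z = ∫ z in a..b, f y z := by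
    have hfy : f y = (Ioi y).indicator (h y) := rfl
    rw [hfy, integral_of_le hab, integral_of_le hy.2.le, setIntegral_indicator measurableSet_Ioi,
      Ioc_inter_Ioi, max_eq_right hy.1.le]
  have hright {z : ℝ} (hz : z ∈ Ioo a b) : ∫ y in a..z, h y z = ∫ y in a..b, f y z := by
    have hfz : (f · z) = (Iio z).indicator (h · z) := rfl
    have hset : Ioc a b ∩ Iio z = Ioo a z := by grind
    rw [hfz, integral_of_le hab, integral_of_le hz.1.le, setIntegral_indicator measurableSet_Iio,
      hset, integral_Ioc_eq_integral_Ioo]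
  calc ∫ y in a..b, ∫ z in y..b, h y z
      = ∫ y in a..b, ∫ z in a..b, f y z := integral_congr_Ioo_of_le hab fun y hy => hleft hy
    _ = ∫ z in a..b, ∫ y in a..b, f y z := intervalIntegral_intervalIntegral_swap hf
    _ = ∫ z in a..b, ∫ y in a..z, h y z := integral_congr_Ioo_of_le hab fun z hz => (hright hz).symm

theorem integral_triangle_swap (hh : Continuous (uncurry h)) (a b : ℝ) :
    ∫ y in a..b, ∫ z in y..b, h y z = ∫ z in a..b, ∫ y in a..z, h y z := by
  rcases le_total a b with hab | hba
  · exact integral_triangle_swap_of_le hh hab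
  · have hswap := integral_triangle_swap_of_le (h := fun z y => h y z)
      (hh.comp continuous_swap) hba
    simp only [integral_symm b a, integral_symm b, intervalIntegral.integral_neg]
    simp only [integral_symm _ a, intervalIntegral.integral_neg, hswap]

end Fubini

section Kernel

variable {A : Type*} [NormedRing A] [NormedAlgebra ℝ A]

/-- The composition of two Volterra kernels: the kernel of the product of the integral operators
they define. -/
noncomputable def kernelComp (K L : ℝ → ℝ → A) (x y : ℝ) : A :=
  ∫ z in x..y, K x z * L z y

/-- The iterated kernels of the Neumann series of `K`; the index is shifted, so that
`iteratedKernel K n` is the `(n + 1)`-fold composition of `K` with itself. -/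
noncomputable def iteratedKernel (K : ℝ → ℝ → A) : ℕ → ℝ → ℝ → A
  | 0 => K
  | n + 1 => kernelComp (iteratedKernel K n) K

/-- The Neumann series of the kernel `K`, i.e. the kernel `S` with `1 + S = (1 - K)⁻¹` as
integral operators. -/
noncomputable def neumannKernel (K : ℝ → ℝ → A) (x y : ℝ) : A :=
  ∑' n, iteratedKernel K n x y

variable {K L : ℝ → ℝ → A}

theorem continuous_kernelComp (hK : Continuous (uncurry K)) (hL : Continuous (uncurry L)) :
    Continuous (uncurry (kernelComp K L)) :=
  continuous_intervalIntegral_of_continuous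
    (f := fun (p : ℝ × ℝ) z => K p.1 z * L z p.2) (by fun_prop) continuous_fst continuous_snd

theorem continuous_iteratedKernel (hK : Continuous (uncurry K)) (n : ℕ) :
    Continuous (uncurry (iteratedKernel K n)) := by
  induction n with
  | zero => exact hK
  | succ n ih => exact continuous_kernelComp ih hK

theorem norm_iteratedKernel_le {M : ℝ} {s : Set ℝ} [s.OrdConnected]
    (hM : ∀ x ∈ s, ∀ y ∈ s, ‖K x y‖ ≤ M) (n : ℕ) {x y : ℝ} (hx : x ∈ s) (hy : y ∈ s) :
    ‖iteratedKernel K n x y‖ ≤ M * ((M * |y - x|) ^ n / n !) := by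
  have hM0 : 0 ≤ M := (norm_nonneg _).trans (hM x hx x hx)
  induction n generalizing y with
  | zero => simpa [iteratedKernel] using hM x hx y hy
  | succ n ih =>
    have hstep : ∀ z ∈ uIoc x y,
        ‖iteratedKernel K n x z * K z y‖ ≤ M ^ (n + 2) / n ! * |z - x| ^ n := fun z hz => by
      have hzs : z ∈ s := OrdConnected.uIcc_subset ‹_› hx hy (uIoc_subset_uIcc hz)
      calc ‖iteratedKernel K n x z * K z y‖
          ≤ M * ((M * |z - x|) ^ n / n !) * M := norm_mul_le_of_le (ih hzs) (hM z hzs y hy)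
        _ = M ^ (n + 2) / n ! * |z - x| ^ n := by ring
    calc ‖iteratedKernel K (n + 1) x y‖
        ≤ M ^ (n + 2) / n ! * (|y - x| ^ (n + 1) / (n + 1)) :=
          norm_integral_le_of_norm_le_pow (by positivity) hstep
      _ = M * ((M * |y - x|) ^ (n + 1) / (n + 1)!) := by
          rw [Nat.factorial_succ]; push_cast; field_simp; ring

theorem exists_summable_norm_iteratedKernel_le (hK : Continuous (uncurry K)) (a b : ℝ) :
    ∃ u : ℕ → ℝ, Summable u ∧
      ∀ n, ∀ x ∈ Icc a b, ∀ y ∈ Icc a b, ‖iteratedKernel K n x y‖ ≤ u n := by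
  have hcompact : IsCompact (Icc a b ×ˢ Icc a b) := isCompact_Icc.prod isCompact_Icc
  obtain ⟨M, hM⟩ := hcompact.exists_bound_of_continuousOn hK.continuousOn
  refine ⟨fun n => M * ((M * (b - a)) ^ n / n !),
    (Real.summable_pow_div_factorial _).mul_left M, fun n x hx y hy => ?_⟩
  have hM0 : 0 ≤ M := (norm_nonneg _).trans (hM (x, y) ⟨hx, hy⟩)
  have hxy : |y - x| ≤ b - a :=
    abs_sub_le_iff.2 ⟨by linarith [hx.1, hy.2], by linarith [hx.2, hy.1]⟩
  calc ‖iteratedKernel K n x y‖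
      ≤ M * ((M * |y - x|) ^ n / n !) :=
        norm_iteratedKernel_le (fun x hx y hy => hM (x, y) ⟨hx, hy⟩) n hx hy
    _ ≤ M * ((M * (b - a)) ^ n / n !) := by gcongr

theorem summable_iteratedKernel [CompleteSpace A] (hK : Continuous (uncurry K)) (x y : ℝ) :
    Summable fun n => iteratedKernel K n x y := by
  obtain ⟨u, hu, hKu⟩ := exists_summable_norm_iteratedKernel_le hK (min x y) (max x y)
  exact .of_norm_bounded hu fun n => hKu n x left_mem_uIcc y right_mem_uIcc

theorem continuous_neumannKernel [CompleteSpace A] (hK : Continuous (uncurry K)) :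
    Continuous (uncurry (neumannKernel K)) := by
  refine continuous_iff_continuousAt.2 fun p => ?_
  obtain ⟨R, hpR⟩ : ∃ R, p ∈ Ioo (-R) R ×ˢ Ioo (-R) R := by
    refine ⟨max |p.1| |p.2| + 1, abs_lt.1 ?_, abs_lt.1 ?_⟩ <;> grind
  obtain ⟨u, hu, hKu⟩ := exists_summable_norm_iteratedKernel_le hK (-R) R
  have hcont : ContinuousOn (uncurry (neumannKernel K)) (Icc (-R) R ×ˢ Icc (-R) R) :=
    continuousOn_tsum (fun n => (continuous_iteratedKernel hK n).continuousOn) hu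
      fun n q hq => hKu n q.1 hq.1 q.2 hq.2
  exact hcont.continuousAt <|
    prod_mem_nhds (Icc_mem_nhds hpR.1.1 hpR.1.2) (Icc_mem_nhds hpR.2.1 hpR.2.2)

theorem neumannKernel_eq_add_kernelComp [CompleteSpace A] (hK : Continuous (uncurry K))
    (x y : ℝ) : neumannKernel K x y = K x y + kernelComp (neumannKernel K) K x y := by
  obtain ⟨u, hu, hKu⟩ := exists_summable_norm_iteratedKernel_le hK (min x y) (max x y)
  have hsum : HasSum (fun n => iteratedKernel K (n + 1) x y)
      (kernelComp (neumannKernel K) K x y) := by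
    refine intervalIntegral.hasSum_integral_of_dominated_convergence
      (fun n z => u n * ‖K z y‖) (fun n => ?_) (fun n => .of_forall fun z hz => ?_)
      (.of_forall fun z _ => hu.mul_right _) ?_
      (.of_forall fun z _ => (summable_iteratedKernel hK x z).hasSum.mul_right _)
    · have := continuous_iteratedKernel hK n
      exact Continuous.aestronglyMeasurable (by fun_prop)
    · exact norm_mul_le_of_le (hKu n x left_mem_uIcc z (uIoc_subset_uIcc hz)) le_rfl
    · simp only [tsum_mul_right]
      exact Continuous.intervalIntegrable (by fun_prop) _ _
  exact (summable_iteratedKernel hK x y).tsum_eq_zero_add.trans <|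
    congrArg (K x y + ·) hsum.tsum_eq

theorem exists_continuous_add_add_kernelComp_eq_zero [CompleteSpace A]
    (hK : Continuous (uncurry K)) :
    ∃ L : ℝ → ℝ → A, Continuous (uncurry L) ∧ L + K + kernelComp L K = 0 := by
  have hK' : Continuous (uncurry (-K)) := hK.neg
  refine ⟨neumannKernel (-K), continuous_neumannKernel hK', ?_⟩
  funext x y
  have hN : neumannKernel (-K) x y = -K x y - kernelComp (neumannKernel (-K)) K x y := by
    simpa [kernelComp, sub_eq_add_neg] using neumannKernel_eq_add_kernelComp hK' x y
  simp only [Pi.add_apply, Pi.zero_apply]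
  nth_rw 1 [hN]
  abel

end Kernel

section Transform

variable {E : Type*} [NormedAddCommGroup E] [NormedSpace ℝ E] {K L : ℝ → ℝ → E →L[ℝ] E}
  {u : ℝ → E} {a b : ℝ}

/-- The Volterra transformation of the second kind with kernel `K`, the integral running up to the
fixed endpoint `b`. -/
noncomputable def volterraTransform (b : ℝ) (K : ℝ → ℝ → E →L[ℝ] E) (u : ℝ → E) (x : ℝ) : E :=
  u x + ∫ y in x..b, K x y (u y)

/-- The domain of the kernels: the part of the square `[a, b]²` above the diagonal. -/
def triangle (a b : ℝ) : Set (ℝ × ℝ) :=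
  {p | p.1 ∈ Icc a b ∧ p.2 ∈ Icc a b ∧ p.1 ≤ p.2}

theorem continuous_volterraTransform (hK : Continuous (uncurry K)) (hu : Continuous u) (b : ℝ) :
    Continuous (volterraTransform b K u) :=
  hu.add <| continuous_intervalIntegral_of_continuous (f := fun x y => K x y (u y)) (by fun_prop)
    continuous_id continuous_const

theorem integral_apply_integral_eq_integral_kernelComp [CompleteSpace E]
    (hL : Continuous (uncurry L)) (hK : Continuous (uncurry K)) (hu : Continuous u) (x b : ℝ) :
    ∫ y in x..b, L x y (∫ z in y..b, K y z (u z)) = ∫ z in x..b, kernelComp L K x z (u z) :=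
  calc ∫ y in x..b, L x y (∫ z in y..b, K y z (u z))
      = ∫ y in x..b, ∫ z in y..b, L x y (K y z (u z)) := by
        congr! 2 with y
        exact ((L x y).intervalIntegral_comp_comm
          (Continuous.intervalIntegrable (by fun_prop) _ _)).symm
    _ = ∫ z in x..b, ∫ y in x..z, L x y (K y z (u z)) :=
        integral_triangle_swap (h := fun y z => L x y (K y z (u z))) (by fun_prop) x b
    _ = ∫ z in x..b, kernelComp L K x z (u z) := by
        congr! 2 with z
        have hLKz : Continuous fun y => L x y * K y z := by fun_prop
        exact (ContinuousLinearMap.intervalIntegral_apply (hLKz.intervalIntegrable _ _) (u z)).symm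

theorem volterraTransform_volterraTransform [CompleteSpace E] (hL : Continuous (uncurry L))
    (hK : Continuous (uncurry K)) (hu : Continuous u) (b : ℝ) :
    volterraTransform b L (volterraTransform b K u)
      = volterraTransform b (L + K + kernelComp L K) u := by
  funext x
  have hKu_cont : Continuous fun y => ∫ z in y..b, K y z (u z) :=
    continuous_intervalIntegral_of_continuous (f := fun y z => K y z (u z)) (by fun_prop)
      continuous_id continuous_const
  have hLK := continuous_kernelComp hL hK
  have hLu_int : IntervalIntegrable (fun y => L x y (u y)) volume x b :=
    Continuous.intervalIntegrable (by fun_prop) _ _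
  have hLKu_int : IntervalIntegrable (fun y => L x y (∫ z in y..b, K y z (u z))) volume x b :=
    Continuous.intervalIntegrable (by fun_prop) _ _
  have hKu_int : IntervalIntegrable (fun y => K x y (u y)) volume x b :=
    Continuous.intervalIntegrable (by fun_prop) _ _
  have hcomp_int : IntervalIntegrable (fun y => kernelComp L K x y (u y)) volume x b :=
    Continuous.intervalIntegrable (by fun_prop) _ _
  simp only [volterraTransform, Pi.add_apply, map_add, _root_.add_apply]
  rw [integral_add hLu_int hLKu_int, integral_apply_integral_eq_integral_kernelComp hL hK hu,
    integral_add (hLu_int.add hKu_int) hcomp_int, integral_add hLu_int hKu_int]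
  abel

theorem exists_volterraTransform_leftInverse [CompleteSpace E] (hK : Continuous (uncurry K))
    (b : ℝ) : ∃ L : ℝ → ℝ → E →L[ℝ] E, Continuous (uncurry L) ∧
      ∀ u, Continuous u → volterraTransform b L (volterraTransform b K u) = u := by
  obtain ⟨L, hL, hLK⟩ := exists_continuous_add_add_kernelComp_eq_zero hK
  refine ⟨L, hL, fun u hu => ?_⟩
  rw [volterraTransform_volterraTransform hL hK hu, hLK]
  funext x
  simp [volterraTransform]

-- As in a monoid all of whose elements have left inverses, a left inverse is two-sided.
theorem exists_volterraTransform_inverse [CompleteSpace E] (hK : Continuous (uncurry K))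
    (b : ℝ) : ∃ L : ℝ → ℝ → E →L[ℝ] E, Continuous (uncurry L) ∧
      (∀ u, Continuous u → volterraTransform b L (volterraTransform b K u) = u) ∧
      ∀ g, Continuous g → volterraTransform b K (volterraTransform b L g) = g := by
  obtain ⟨L, hL, hLK⟩ := exists_volterraTransform_leftInverse hK b
  obtain ⟨M, -, hML⟩ := exists_volterraTransform_leftInverse hL b
  refine ⟨L, hL, hLK, fun g hg => ?_⟩
  have hLg := continuous_volterraTransform hL hg b
  calc volterraTransform b K (volterraTransform b L g)
      = volterraTransform b M (volterraTransform b L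
          (volterraTransform b K (volterraTransform b L g))) :=
        (hML _ (continuous_volterraTransform hK hLg b)).symm
    _ = volterraTransform b M (volterraTransform b L g) := by rw [hLK _ hLg]
    _ = g := hML g hg

theorem volterraTransform_eqOn {K' : ℝ → ℝ → E →L[ℝ] E} {u' : ℝ → E}
    (hK : EqOn (uncurry K) (uncurry K') (triangle a b)) (hu : EqOn u u' (Icc a b)) :
    EqOn (volterraTransform b K u) (volterraTransform b K' u') (Icc a b) := by
  intro x hx
  refine congrArg₂ (· + ·) (hu hx) (integral_congr fun y hy => ?_)
  rw [uIcc_of_le hx.2] at hy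
  have hyI : y ∈ Icc a b := Icc_subset_Icc_left hx.1 hy
  exact congrArg₂ (fun k v => k v) (hK (x := (x, y)) ⟨hx, hyI, hy.1⟩) (hu hyI)

end Transform

section Extension

variable {Y : Type*} [TopologicalSpace Y] {a b : ℝ}

theorem exists_continuous_eqOn_Icc (hab : a ≤ b) {f : ℝ → Y} (hf : ContinuousOn f (Icc a b)) :
    ∃ g, Continuous g ∧ EqOn g f (Icc a b) :=
  ⟨IccExtend hab (domRestrict (Icc a b) f), hf.domRestrict.Icc_extend', fun _ hx =>
    IccExtend_of_mem hab _ hx⟩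

theorem exists_continuous_eqOn_triangle (hab : a ≤ b) {f : ℝ → ℝ → Y}
    (hf : ContinuousOn (uncurry f) (triangle a b)) :
    ∃ g : ℝ → ℝ → Y, Continuous (uncurry g) ∧ EqOn (uncurry g) (uncurry f) (triangle a b) := by
  let c (x : ℝ) : ℝ := projIcc a b hab x
  have hc : Continuous c := continuous_subtype_val.comp continuous_projIcc
  have hc_mem (x : ℝ) : c x ∈ Icc a b := (projIcc a b hab x).2
  have hc_eq {x : ℝ} (hx : x ∈ Icc a b) : c x = x := by simp only [c, projIcc_of_mem hab hx]
  -- `(x, y) ↦ (c x, max (c x) (c y))` retracts the plane onto the triangle.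
  have hr_mem (p : ℝ × ℝ) : (c p.1, max (c p.1) (c p.2)) ∈ triangle a b :=
    ⟨hc_mem _, max_rec' (· ∈ Icc a b) (hc_mem _) (hc_mem _), le_max_left _ _⟩
  refine ⟨fun x y => f (c x) (max (c x) (c y)), hf.comp_continuous (by fun_prop) hr_mem, ?_⟩
  rintro ⟨x, y⟩ ⟨hx, hy, hxy⟩
  simp only [uncurry_apply_pair, hc_eq hx, hc_eq hy, max_eq_right hxy]

end Extension

theorem stmt1_general {E : Type*} [NormedAddCommGroup E] [NormedSpace ℝ E] [CompleteSpace E]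
    {a b : ℝ} (hab : a ≤ b) {K : ℝ → ℝ → E →L[ℝ] E}
    (hK : ContinuousOn (uncurry K) (triangle a b)) :
    ∃ L : ℝ → ℝ → E →L[ℝ] E, ContinuousOn (uncurry L) (triangle a b) ∧
      (∀ u, ContinuousOn u (Icc a b) →
        EqOn u (volterraTransform b L (volterraTransform b K u)) (Icc a b)) ∧
      ∀ g, ContinuousOn g (Icc a b) → ∃ u, ContinuousOn u (Icc a b) ∧
        EqOn (volterraTransform b K u) g (Icc a b) ∧
        ∀ u', ContinuousOn u' (Icc a b) → EqOn (volterraTransform b K u') g (Icc a b) →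
          EqOn u' u (Icc a b) := by
  obtain ⟨k, hk, hkK⟩ := exists_continuous_eqOn_triangle hab hK
  obtain ⟨L, hL, hLk, hkL⟩ := exists_volterraTransform_inverse hk b
  have hres (u : ℝ → E) (hu : ContinuousOn u (Icc a b)) :
      EqOn u (volterraTransform b L (volterraTransform b K u)) (Icc a b) := by
    obtain ⟨v, hv, hvu⟩ := exists_continuous_eqOn_Icc hab hu
    have hkv := volterraTransform_eqOn (eqOn_refl (uncurry L) _) (volterraTransform_eqOn hkK hvu)
    exact hvu.symm.trans (hLk v hv ▸ hkv)
  refine ⟨L, hL.continuousOn, hres, fun g hg => ?_⟩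
  obtain ⟨w, hw, hwg⟩ := exists_continuous_eqOn_Icc hab hg
  refine ⟨volterraTransform b L w, (continuous_volterraTransform hL hw b).continuousOn, ?_, ?_⟩
  · have hKw := volterraTransform_eqOn hkK (eqOn_refl (volterraTransform b L w) _)
    exact (hkL w hw ▸ hKw).symm.trans hwg
  · intro u' hu' hu'g
    exact (hres u' hu').trans <|
      volterraTransform_eqOn (eqOn_refl _ _) (hu'g.trans hwg.symm)

section Matrix

variable {ι : Type*} [Fintype ι] [DecidableEq ι]

/-- Matrix-vector multiplication, as the identification of the square matrices with the continuous
linear endomorphisms of `ι → ℝ`; it turns matrix kernels into operator kernels. -/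
noncomputable def mulVecCLE : Matrix ι ι ℝ ≃L[ℝ] ((ι → ℝ) →L[ℝ] (ι → ℝ)) :=
  (toLin'.trans LinearMap.toContinuousLinearMap).toContinuousLinearEquiv

theorem mulVecCLE_symm_mulVec (T : (ι → ℝ) →L[ℝ] (ι → ℝ)) (v : ι → ℝ) :
    mulVecCLE.symm T *ᵥ v = T v :=
  congrArg (fun S : (ι → ℝ) →L[ℝ] (ι → ℝ) => S v) (mulVecCLE.apply_symm_apply T)

end Matrix

/-- invertibility of the Volterra integral transformation of the
second kind `(Tu)(x) = u(x) + ∫_x^1 K(x,y) u(y) dy`: there is a continuous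
resolvent kernel `L` on the triangle `{x ≤ y}` with
`u(x) = (Tu)(x) + ∫_x^1 L(x,y) (Tu)(y) dy`, and `u ↦ Tu` is a (linear)
bijection of `C([0,1],ℝⁿ)` onto itself. -/
theorem stmt1 (n : ℕ) (hn : 1 ≤ n) (K : ℝ → ℝ → Matrix (Fin n) (Fin n) ℝ)
    (hK : ContinuousOn (fun p : ℝ × ℝ => K p.1 p.2)
      {p : ℝ × ℝ | p.1 ∈ Icc (0:ℝ) 1 ∧ p.2 ∈ Icc (0:ℝ) 1 ∧ p.1 ≤ p.2}) :
    ∃ L : ℝ → ℝ → Matrix (Fin n) (Fin n) ℝ,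
      ContinuousOn (fun p : ℝ × ℝ => L p.1 p.2)
        {p : ℝ × ℝ | p.1 ∈ Icc (0:ℝ) 1 ∧ p.2 ∈ Icc (0:ℝ) 1 ∧ p.1 ≤ p.2} ∧
      -- the resolvent identity: `u = Tu + ∫ L · Tu`
      (∀ u : ℝ → Fin n → ℝ, ContinuousOn u (Icc 0 1) →
        ∀ x ∈ Icc (0:ℝ) 1,
          u x = (u x + ∫ y in x..1, K x y *ᵥ u y)
            + ∫ y in x..1, L x y *ᵥ (u y + ∫ z in y..1, K y z *ᵥ u z)) ∧
      -- in particular, `u ↦ Tu` is a bijection of `C([0,1],ℝⁿ)` onto itself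
      (∀ g : ℝ → Fin n → ℝ, ContinuousOn g (Icc 0 1) →
        ∃ u : ℝ → Fin n → ℝ, ContinuousOn u (Icc 0 1) ∧
          (∀ x ∈ Icc (0:ℝ) 1, u x + (∫ y in x..1, K x y *ᵥ u y) = g x) ∧
          ∀ u' : ℝ → Fin n → ℝ, ContinuousOn u' (Icc 0 1) →
            (∀ x ∈ Icc (0:ℝ) 1, u' x + (∫ y in x..1, K x y *ᵥ u' y) = g x) →
            ∀ x ∈ Icc (0:ℝ) 1, u' x = u x) := by
  obtain ⟨L, hL, hres, hbij⟩ := stmt1_general zero_le_one (K := fun x y => mulVecCLE (K x y))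
    (mulVecCLE.continuous.comp_continuousOn hK)
  exact ⟨fun x y => mulVecCLE.symm (L x y), mulVecCLE.symm.continuous.comp_continuousOn hL,
    by simp only [mulVecCLE_symm_mulVec]; exact hres, hbij⟩
end

section
/- Let n ≥ 1, let 0 < λ_1 < λ_2 < … < λ_n be real transport speeds, and let Ǧ : [0,1] × [0, 1/λ_1] → M_n(ℝ) be continuous with Ǧ(x,ν)_{jℓ} = 0 whenever ℓ ≤ j. Let t₀ ∈ ℝ, let ζ : ℝ → ℝⁿ be continuous, and let α : ℝ × [0,1] → ℝⁿ be continuous such that: (i) for all t ∈ ℝ and 1 ≤ j ≤ n, α_j(t,0) = α_j(t + 1/λ_j, 1) + Σ_{ℓ=j+1}^n ∫_0^{1/λ_j} Ǧ(0,ν)_{jℓ} α_ℓ(t + ν, 1) dν; and (ii) for all t > t₀ and 1 ≤ j ≤ n, α_j(t,0) = ζ_j(t + 1/λ_j) + Σ_{ℓ=j+1}^n ∫_0^{1/λ_j} Ǧ(0,ν)_{jℓ} ζ_ℓ(t + ν) dν. Then for all t > t₀ + Σ_{k=1}^n 1/λ_k and all 1 ≤ j ≤ n: α_j(t,1) = ζ_j(t).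 -/
open Matrix Set

/-! Component `j` of the right boundary trace enters the left one with delay `τ j`, and is otherwise
only coupled to components `ℓ > j`. Once those track the reference, equality of the left traces
forces component `j` to track `τ j` later, so a delay of `∑ k ≥ j, τ k`
suffices. -/

section Cascade

variable {ι : Type*} [PartialOrder ι] [LocallyFiniteOrderTop ι]

lemma add_sum_Ici_le_sum_Ici {M : Type*} [AddCommMonoid M] [PartialOrder M] [IsOrderedAddMonoid M]
    {f : ι → M} (hf : 0 ≤ f) {j ℓ : ι} (hjℓ : j < ℓ) :
    f j + ∑ k ∈ Finset.Ici ℓ, f k ≤ ∑ k ∈ Finset.Ici j, f k := by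
  rw [← Finset.add_sum_Ioi_eq_sum_Ici j]
  gcongr
  · exact fun k _ _ => hf k
  · exact fun k hk => Finset.mem_Ioi.2 (hjℓ.trans_le (Finset.mem_Ici.1 hk))

theorem eq_of_triangular_delay {T : Type*} [AddCommGroup T] [PartialOrder T]
    [IsOrderedAddMonoid T] {β : ι → Type*} {τ : ι → T} (hτ : 0 ≤ τ) {t₀ : T}
    {x y : T → (i : ι) → β i}
    (hstep : ∀ t, t₀ < t → ∀ j, (∀ ℓ, j < ℓ → ∀ u, t ≤ u → x u ℓ = y u ℓ) →
      x (t + τ j) j = y (t + τ j) j)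
    {j : ι} {t : T} (ht : t₀ + ∑ k ∈ Finset.Ici j, τ k < t) : x t j = y t j := by
  induction hs : Finset.Ici j using Finset.strongInduction generalizing j t with
  | H s ih =>
    subst hs
    have hstart : t₀ < t - τ j := by
      have hj : τ j ≤ ∑ k ∈ Finset.Ici j, τ k :=
        Finset.single_le_sum (fun k _ => hτ k) (Finset.mem_Ici.2 le_rfl)
      exact lt_sub_iff_add_lt.2 ((add_le_add_right hj t₀).trans_lt ht)
    have habove : ∀ ℓ, j < ℓ → ∀ u, t - τ j ≤ u → x u ℓ = y u ℓ := by
      intro ℓ hjℓ u hu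
      refine ih _ (Finset.Ici_ssubset_Ici.2 hjℓ) ?_ rfl
      refine lt_of_lt_of_le (lt_sub_iff_add_lt.2 ?_) hu
      calc t₀ + ∑ k ∈ Finset.Ici ℓ, τ k + τ j
          = t₀ + (τ j + ∑ k ∈ Finset.Ici ℓ, τ k) := by abel
        _ ≤ t₀ + ∑ k ∈ Finset.Ici j, τ k := by gcongr; exact add_sum_Ici_le_sum_Ici hτ hjℓ
        _ < t := ht
    simpa only [sub_add_cancel] using hstep (t - τ j) hstart j habove

end Cascade

section BoundaryTransfer

variable {ι E : Type*} [PartialOrder ι] [LocallyFiniteOrderTop ι]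
  [NormedAddCommGroup E] [NormedSpace ℝ E]
  {τ : ι → ℝ} {K : ι → ι → ℝ → E → E}

/-- The map from the right boundary trace `b` of a triangularly coupled transport system to its left
boundary trace. `τ j` is the transport time of component `j`, and `K j ℓ ν` is the possibly
nonlinear influence of `b (t + ν) ℓ` on component `j` at time `t`; a coupling term contributes `0`
if it is not integrable, or if `E` is not complete. -/
noncomputable def boundaryTransfer (τ : ι → ℝ) (K : ι → ι → ℝ → E → E) (b : ℝ → ι → E)
    (t : ℝ) (j : ι) : E :=
  b (t + τ j) j + ∑ ℓ ∈ Finset.Ioi j, ∫ ν in (0 : ℝ)..τ j, K j ℓ ν (b (t + ν) ℓ)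

lemma boundaryTransfer_eq_iff {j : ι} (hτ : 0 ≤ τ j) {b c : ℝ → ι → E} {t : ℝ}
    (h : ∀ ℓ, j < ℓ → ∀ u, t ≤ u → b u ℓ = c u ℓ) :
    boundaryTransfer τ K b t j = boundaryTransfer τ K c t j ↔
      b (t + τ j) j = c (t + τ j) j := by
  have hcoupling : ∑ ℓ ∈ Finset.Ioi j, ∫ ν in (0 : ℝ)..τ j, K j ℓ ν (b (t + ν) ℓ)
      = ∑ ℓ ∈ Finset.Ioi j, ∫ ν in (0 : ℝ)..τ j, K j ℓ ν (c (t + ν) ℓ) := by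
    refine Finset.sum_congr rfl fun ℓ hℓ => intervalIntegral.integral_congr fun ν hν => ?_
    have hν₀ : 0 ≤ ν := (uIcc_of_le hτ ▸ hν).1
    exact congrArg (K j ℓ ν) (h ℓ (Finset.mem_Ioi.1 hℓ) _ (le_add_of_nonneg_right hν₀))
  rw [boundaryTransfer, boundaryTransfer, hcoupling, add_left_inj]

theorem stmt6_general [CompleteSpace E] (hτ : 0 ≤ τ) {t₀ : ℝ} {a b ζ : ℝ → ι → E}
    (hrep : ∀ t, t₀ < t → ∀ j, a t j = boundaryTransfer τ K b t j)
    (htrack : ∀ t, t₀ < t → ∀ j, a t j = boundaryTransfer τ K ζ t j)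
    {t : ℝ} {j : ι} (ht : t₀ + ∑ k ∈ Finset.Ici j, τ k < t) : b t j = ζ t j :=
  eq_of_triangular_delay hτ
    (fun s hs i habove => (boundaryTransfer_eq_iff (hτ i) habove).1
      ((hrep s hs i).symm.trans (htrack s hs i))) ht

end BoundaryTransfer

/-- output trajectory tracking (Property 1 of the paper). If the
left boundary trace of the strictly upper-triangularly closed transport
subsystem is prescribed by the flatness-based feedforward tracking law for
`t > t₀`, then after the finite time `t₀ + ∑_k 1/λ_k` the right output exactly
tracks the reference: `α(t,1) = ζ(t)`. -/
theorem stmt6 (n : ℕ) (hn : 1 ≤ n) (lam : Fin n → ℝ)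
    (hpos : ∀ j, 0 < lam j) (hmono : StrictMono lam)
    (Gc : ℝ → ℝ → Matrix (Fin n) (Fin n) ℝ)
    (hGcCont : ContinuousOn (fun p : ℝ × ℝ => Gc p.1 p.2)
      (Icc (0:ℝ) 1 ×ˢ Icc (0:ℝ) (1 / lam ⟨0, hn⟩)))
    (hGcTri : ∀ x ν : ℝ, ∀ j ℓ : Fin n, ℓ ≤ j → Gc x ν j ℓ = 0)
    (t₀ : ℝ) (ζ : ℝ → Fin n → ℝ) (hζ : Continuous ζ)
    (α : ℝ → ℝ → Fin n → ℝ)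
    (hα : Continuous (fun p : ℝ × ℝ => α p.1 p.2))
    -- (i) closed boundary-to-boundary representation of the subsystem
    (hrep : ∀ t : ℝ, ∀ j : Fin n,
      α t 0 j = α (t + 1 / lam j) 1 j
        + ∑ ℓ ∈ Finset.univ.filter (fun ℓ => j < ℓ),
            ∫ ν in (0:ℝ)..(1 / lam j), Gc 0 ν j ℓ * α (t + ν) 1 ℓ)
    -- (ii) the prescribed flatness-based feedforward tracking law
    (htrack : ∀ t : ℝ, t₀ < t → ∀ j : Fin n,
      α t 0 j = ζ (t + 1 / lam j) j
        + ∑ ℓ ∈ Finset.univ.filter (fun ℓ => j < ℓ),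
            ∫ ν in (0:ℝ)..(1 / lam j), Gc 0 ν j ℓ * ζ (t + ν) ℓ) :
    ∀ t : ℝ, t₀ + ∑ k : Fin n, 1 / lam k < t → ∀ j : Fin n,
      α t 1 j = ζ t j := by
  intro t ht j
  have hτ : (0 : Fin n → ℝ) ≤ fun k => 1 / lam k := fun k => (one_div_pos.2 (hpos k)).le
  simp only [Finset.filter_lt_eq_Ioi] at hrep htrack
  exact stmt6_general (K := fun j ℓ ν v => Gc 0 ν j ℓ * v) (a := fun t => α t 0)
    (b := fun t => α t 1) hτ (fun t _ => hrep t) htrack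
    ((add_le_add_right (Finset.sum_le_univ_sum_of_nonneg hτ) t₀).trans_lt ht)
end

section
/- Let n, m, p ≥ 1, let 0 < μ_1 < μ_2 < … < μ_m and λ > 0 be real numbers, let R ∈ M_{m×n}(ℝ) and R' ∈ M_{m×p}(ℝ), and let F : [0, 1/λ] → M_{n×p}(ℝ), Ḡ : [0,1] → M_{m×n}(ℝ), f̄ : [0,1] → M_{m×p}(ℝ) be continuous. For continuous ζ : ℝ → ℝⁿ and v : ℝ → ℝᵖ, define β : ℝ × [0,1] → ℝᵐ componentwise by β_j(t,x) = Σ_{k=1}^n R_{jk} ζ_k(t − (1−x)/μ_j) + Σ_{k=1}^p R'_{jk} v_k(t − (1−x)/μ_j) − Σ_{k=1}^n Σ_{ℓ=1}^p ∫_0^{1/λ} R_{jk} F(y)_{kℓ} v_ℓ(t − y − (1−x)/μ_j) dy + Σ_{k=1}^n ∫_0^{(1−x)/μ_j} Ḡ(x + μ_j ν)_{jk} ζ_k(t − ν) dν + Σ_{k=1}^p ∫_0^{(1−x)/μ_j} f̄(x + μ_j ν)_{jk} v_k(t − ν) dν. Then there exists a constant K > 0, depending only on μ_1, …, μ_m,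 λ, R, R', F, Ḡ, f̄, such that for every continuous ζ, v and every t ∈ ℝ: ∫_0^1 ‖β(t,x)‖² dx ≤ K ( ∫_{t − 1/μ_1}^t ‖ζ(s)‖² ds + ∫_{t − 1/μ_1 − 1/λ}^t ‖v(s)‖² ds ). -/
open Matrix Set

/-!
Each component of `β(t, ·)` is a sum of two pointwise delayed values and three history integrals.
By Cauchy-Schwarz a history integral is at most the `L²` norm of its kernel times the `L²` norm of
the signal over the window it reads, uniformly in `x`. The pointwise values are not controlled for
a single `x`, but integrating over `x ∈ [0, 1]` with `s = t - (1 - x) / μ_j` turns their squares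
into `μ_j` times an integral over a time window of length `1 / μ_j`. Every window is contained in
the one of the slowest speed, enlarged by `1 / λ` for `v` because of the extra delay in the `F`
term.
-/

open MeasureTheory

lemma sq_integral_mul_le {α : Type*} [MeasurableSpace α] {ν : Measure α} {f g : α → ℝ}
    (hf : MemLp f 2 ν) (hg : MemLp g 2 ν) :
    (∫ a, f a * g a ∂ν) ^ 2 ≤ (∫ a, f a ^ 2 ∂ν) * ∫ a, g a ^ 2 ∂ν := by
  have hf_sq (z : ℝ) : Integrable (fun a ↦ z ^ 2 * f a ^ 2) ν := hf.integrable_sq.const_mul _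
  have hfg (z : ℝ) : Integrable (fun a ↦ 2 * z * (f a * g a)) ν :=
    (hf.integrable_mul hg).const_mul _
  have hsum (z : ℝ) : Integrable (fun a ↦ z ^ 2 * f a ^ 2 + 2 * z * (f a * g a)) ν :=
    (hf_sq z).add (hfg z)
  have quadratic_nonneg (z : ℝ) : 0 ≤ (∫ a, f a ^ 2 ∂ν) * (z * z)
      + 2 * (∫ a, f a * g a ∂ν) * z + ∫ a, g a ^ 2 ∂ν := by
    calc 0 ≤ ∫ a, (z * f a + g a) ^ 2 ∂ν := integral_nonneg fun _ ↦ sq_nonneg _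
      _ = ∫ a, (z ^ 2 * f a ^ 2 + 2 * z * (f a * g a)) + g a ^ 2 ∂ν := by
        congr 1 with a
        ring
      _ = _ := by
        rw [integral_add (hsum z) hg.integrable_sq,
          integral_add (hf_sq z) (hfg z), integral_const_mul, integral_const_mul]
        ring
  have := discrim_le_zero quadratic_nonneg
  rw [discrim] at this
  linarith

lemma memLp_restrict_of_continuousOn {α E : Type*} [TopologicalSpace α] [MeasurableSpace α]
    [OpensMeasurableSpace α] [TopologicalSpace.MetrizableSpace α] [NormedAddCommGroup E]
    {ν : Measure α} [IsFiniteMeasureOnCompacts ν] {f : α → E} {s : Set α} {p : ENNReal}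
    (hs : IsCompact s) (hf : ContinuousOn f s) : MemLp f p (ν.restrict s) := by
  obtain ⟨C, hC⟩ := hs.exists_bound_of_continuousOn hf
  have : IsFiniteMeasure (ν.restrict s) := isFiniteMeasure_restrict.mpr hs.measure_lt_top.ne
  exact .of_bound (hf.aestronglyMeasurable_of_isCompact hs hs.measurableSet) C
    (ae_restrict_of_forall_mem hs.measurableSet hC)

lemma memLp_comp_add_mul {E : Type*} [NormedAddCommGroup E] {u : ℝ → E} {p : ENNReal}
    {s s' : Set ℝ} {c : ℝ} (hc : c ≠ 0) (d : ℝ)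
    (hmaps : MapsTo (fun y ↦ d + c * y) s' s) (hu : MemLp u p (volume.restrict s)) :
    MemLp (fun y ↦ u (d + c * y)) p (volume.restrict s') := by
  have embedding : MeasurableEmbedding fun y : ℝ ↦ d + c * y :=
    (measurableEmbedding_addLeft d).comp (measurableEmbedding_mulLeft₀ hc)
  have map_volume :
      volume.map (fun y : ℝ ↦ d + c * y) = ENNReal.ofReal |c⁻¹| • (volume : Measure ℝ) :=
    calc volume.map (fun y : ℝ ↦ d + c * y) = (volume.map (c * ·)).map (d + ·) :=
          (Measure.map_map (measurable_const_add d) (measurable_const_mul c)).symm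
      _ = ENNReal.ofReal |c⁻¹| • (volume : Measure ℝ) := by
          rw [Real.map_volume_mul_left hc, Measure.map_smul, map_add_left_eq_self]
  have memLp_map : MemLp u p ((volume.map fun y : ℝ ↦ d + c * y).restrict s) := by
    rw [map_volume, Measure.restrict_smul]
    exact hu.smul_measure ENNReal.ofReal_ne_top
  rw [embedding.restrict_map, embedding.memLp_map_measure_iff] at memLp_map
  exact memLp_map.mono_measure (Measure.restrict_mono hmaps le_rfl)

lemma integral_sum_le_sum_of_le {ι : Type*} [Fintype ι] {a b : ℝ} (hab : a ≤ b)
    {f g : ι → ℝ → ℝ} {C : ι → ℝ} (hf : ∀ j x, 0 ≤ f j x)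
    (hfg : ∀ j, ∀ x ∈ Icc a b, f j x ≤ g j x) (hg : ∀ j, IntervalIntegrable (g j) volume a b)
    (hC : ∀ j, ∫ x in a..b, g j x ≤ C j) :
    ∫ x in a..b, ∑ j, f j x ≤ ∑ j, C j :=
  calc ∫ x in a..b, ∑ j, f j x ≤ ∫ x in a..b, ∑ j, g j x := by
        rw [intervalIntegral.integral_of_le hab, intervalIntegral.integral_of_le hab]
        refine integral_mono_of_nonneg (ae_of_all _ fun x ↦ Finset.sum_nonneg fun j _ ↦ hf j x)
          (integrable_finsetSum _ fun j _ ↦ (hg j).1) ?_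
        exact ae_restrict_of_forall_mem measurableSet_Ioc fun x hx ↦
          Finset.sum_le_sum fun j _ ↦ hfg j x (Ioc_subset_Icc_self hx)
    _ = ∑ j, ∫ x in a..b, g j x := intervalIntegral.integral_finsetSum fun j _ ↦ hg j
    _ ≤ ∑ j, C j := Finset.sum_le_sum fun j _ ↦ hC j

section Energy

variable {κ : Type*} [Fintype κ]

/-- The energy `∫_a^b ‖u(s)‖² ds` of a vector-valued signal. The Euclidean norm is written out as a
sum of squares because `κ → ℝ` carries the sup norm. -/
noncomputable def energy (u : ℝ → κ → ℝ) (a b : ℝ) : ℝ :=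
  ∫ s in a..b, ∑ k, u s k ^ 2

lemma energy_nonneg (u : ℝ → κ → ℝ) {a b : ℝ} (hab : a ≤ b) : 0 ≤ energy u a b :=
  intervalIntegral.integral_nonneg hab fun _ _ ↦ Finset.sum_nonneg fun _ _ ↦ sq_nonneg _

lemma intervalIntegrable_sq_of_memLp {f : ℝ → ℝ} {a b : ℝ} (hab : a ≤ b)
    (hf : MemLp f 2 (volume.restrict (Icc a b))) :
    IntervalIntegrable (fun s ↦ f s ^ 2) volume a b :=
  (intervalIntegrable_iff_integrableOn_Icc_of_le hab).mpr hf.integrable_sq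

lemma intervalIntegrable_sum_sq_of_memLp {u : ℝ → κ → ℝ} {a b : ℝ} (hab : a ≤ b)
    (hu : MemLp u 2 (volume.restrict (Icc a b))) :
    IntervalIntegrable (fun s ↦ ∑ k, u s k ^ 2) volume a b :=
  (intervalIntegrable_iff_integrableOn_Icc_of_le hab).mpr
    (integrable_finsetSum _ fun k _ ↦ (hu.eval k).integrable_sq)

lemma energy_mono_interval {u : ℝ → κ → ℝ} {a b c d : ℝ}
    (hu : MemLp u 2 (volume.restrict (Icc c d))) (hca : c ≤ a) (hab : a ≤ b) (hbd : b ≤ d) :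
    energy u a b ≤ energy u c d :=
  intervalIntegral.integral_mono_interval hca hab hbd
    (ae_of_all _ fun _ ↦ Finset.sum_nonneg fun _ _ ↦ sq_nonneg _)
    (intervalIntegrable_sum_sq_of_memLp (hca.trans (hab.trans hbd)) hu)

lemma energy_comp_sub_left (u : ℝ → κ → ℝ) (s ℓ : ℝ) :
    energy (fun y ↦ u (s - y)) 0 ℓ = energy u (s - ℓ) s := by
  simp only [energy]
  rw [intervalIntegral.integral_comp_sub_left (fun y ↦ ∑ k, u y k ^ 2), sub_zero]

lemma energy_comp_add_mul (u : ℝ → κ → ℝ) {c : ℝ} (hc : c ≠ 0) (a b d : ℝ) :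
    energy (fun y ↦ u (d + c * y)) a b = c⁻¹ * energy u (d + c * a) (d + c * b) :=
  intervalIntegral.integral_comp_add_mul (fun y ↦ ∑ k, u y k ^ 2) hc d

lemma sq_sum_integral_mul_le_energy_mul_energy {h u : ℝ → κ → ℝ} {a b : ℝ} (hab : a ≤ b)
    (hh : MemLp h 2 (volume.restrict (Icc a b))) (hu : MemLp u 2 (volume.restrict (Icc a b))) :
    (∑ k, ∫ y in a..b, h y k * u y k) ^ 2 ≤ energy h a b * energy u a b := by
  have energy_eq_sum {w : ℝ → κ → ℝ} (hw : MemLp w 2 (volume.restrict (Icc a b))) :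
      energy w a b = ∑ k, ∫ y in a..b, w y k ^ 2 :=
    intervalIntegral.integral_finsetSum fun k _ ↦ intervalIntegrable_sq_of_memLp hab (hw.eval k)
  have integral_sq_nonneg (w : ℝ → κ → ℝ) (k : κ) : 0 ≤ ∫ y in a..b, w y k ^ 2 :=
    intervalIntegral.integral_nonneg hab fun _ _ ↦ sq_nonneg _
  rw [energy_eq_sum hh, energy_eq_sum hu]
  refine Finset.sum_sq_le_sum_mul_sum_of_sq_le_mul _ (fun k _ ↦ integral_sq_nonneg h k)
    (fun k _ ↦ integral_sq_nonneg u k) fun k _ ↦ ?_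
  simp only [intervalIntegral.integral_of_le hab, ← integral_Icc_eq_integral_Ioc]
  exact sq_integral_mul_le (hh.eval k) (hu.eval k)

end Energy

section Delay

variable {κ σ : Type*} [Fintype κ] [Fintype σ]

lemma intervalIntegrable_sum_sq_delay {u : ℝ → κ → ℝ} {a c t : ℝ} (hc : 0 < c)
    (ha : a ≤ t - 1 / c) (hu : MemLp u 2 (volume.restrict (Icc a t))) :
    IntervalIntegrable (fun x ↦ ∑ k, u (t - (1 - x) / c) k ^ 2) volume 0 1 := by
  have delay_eq (x : ℝ) : t - (1 - x) / c = t - 1 / c + c⁻¹ * x := by ring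
  simp only [delay_eq]
  refine intervalIntegrable_sum_sq_of_memLp zero_le_one
    (memLp_comp_add_mul (inv_ne_zero hc.ne') _ (fun x hx ↦ ?_) hu)
  have : 0 ≤ c⁻¹ * x := mul_nonneg (inv_nonneg.mpr hc.le) hx.1
  have : c⁻¹ * x ≤ 1 / c := by
    rw [one_div]
    exact mul_le_of_le_one_right (inv_nonneg.mpr hc.le) hx.2
  constructor <;> linarith

lemma energy_delay_le {u : ℝ → κ → ℝ} {a c t : ℝ} (hc : 0 < c) (ha : a ≤ t - 1 / c)
    (hu : MemLp u 2 (volume.restrict (Icc a t))) :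
    energy (fun x ↦ u (t - (1 - x) / c)) 0 1 ≤ c * energy u a t := by
  have delay_eq (x : ℝ) : t - (1 - x) / c = t - 1 / c + c⁻¹ * x := by ring
  have window_end : t - 1 / c + c⁻¹ * 1 = t := by ring
  simp only [delay_eq]
  rw [energy_comp_add_mul u (inv_ne_zero hc.ne'), inv_inv, mul_zero, add_zero, window_end]
  exact mul_le_mul_of_nonneg_left
    (energy_mono_interval hu ha (sub_le_self t (one_div_pos.mpr hc).le) le_rfl) hc.le

lemma sq_memory_le {h u : ℝ → κ → ℝ} {a b s ℓ : ℝ} (hℓ : 0 ≤ ℓ)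
    (hh : MemLp h 2 (volume.restrict (Icc 0 ℓ))) (hu : MemLp u 2 (volume.restrict (Icc a b)))
    (ha : a ≤ s - ℓ) (hb : s ≤ b) :
    (∑ k, ∫ y in (0 : ℝ)..ℓ, h y k * u (s - y) k) ^ 2 ≤ energy h 0 ℓ * energy u a b := by
  have hu_reflected : MemLp (fun y ↦ u (s - y)) 2 (volume.restrict (Icc 0 ℓ)) := by
    have reflect_eq (y : ℝ) : s - y = s + -1 * y := by ring
    simp only [reflect_eq]
    refine memLp_comp_add_mul (by norm_num) s (fun y hy ↦ ?_) hu
    constructor <;> linarith [hy.1, hy.2]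
  calc _ ≤ energy h 0 ℓ * energy (fun y ↦ u (s - y)) 0 ℓ :=
        sq_sum_integral_mul_le_energy_mul_energy hℓ hh hu_reflected
    _ = energy h 0 ℓ * energy u (s - ℓ) s := by rw [energy_comp_sub_left]
    _ ≤ energy h 0 ℓ * energy u a b := mul_le_mul_of_nonneg_left
        (energy_mono_interval hu ha (sub_le_self s hℓ) hb) (energy_nonneg h hℓ)

lemma sq_memory_along_characteristic_le {g u : ℝ → κ → ℝ} {a c t x : ℝ} (hc : 0 < c)
    (hx : x ∈ Icc (0 : ℝ) 1) (hg : MemLp g 2 (volume.restrict (Icc 0 1)))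
    (hu : MemLp u 2 (volume.restrict (Icc a t))) (ha : a ≤ t - 1 / c) :
    (∑ k, ∫ ν in (0 : ℝ)..(1 - x) / c, g (x + c * ν) k * u (t - ν) k) ^ 2
      ≤ c⁻¹ * energy g 0 1 * energy u a t := by
  have delay_nonneg : 0 ≤ (1 - x) / c := div_nonneg (sub_nonneg.mpr hx.2) hc.le
  have delay_le : (1 - x) / c ≤ 1 / c := by
    gcongr
    exact sub_le_self 1 hx.1
  have exit_eq : x + c * ((1 - x) / c) = 1 := by
    field_simp
    ring
  have hg_scaled : MemLp (fun ν ↦ g (x + c * ν)) 2 (volume.restrict (Icc 0 ((1 - x) / c))) := by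
    refine memLp_comp_add_mul hc.ne' x (fun ν hν ↦ ?_) hg
    constructor
    · exact add_nonneg hx.1 (mul_nonneg hc.le hν.1)
    · exact (add_le_add_right (mul_le_mul_of_nonneg_left hν.2 hc.le) x).trans_eq exit_eq
  have kernel_energy_le : energy (fun ν ↦ g (x + c * ν)) 0 ((1 - x) / c) ≤ c⁻¹ * energy g 0 1 := by
    rw [energy_comp_add_mul g hc.ne', mul_zero, add_zero, exit_eq]
    exact mul_le_mul_of_nonneg_left (energy_mono_interval hg hx.1 hx.2 le_rfl)
      (inv_nonneg.mpr hc.le)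
  exact (sq_memory_le delay_nonneg hg_scaled hu (by linarith) le_rfl).trans
    (mul_le_mul_of_nonneg_right kernel_energy_le (energy_nonneg u (by linarith)))

lemma sq_sum_mul_memory_le {r : κ → ℝ} {F : ℝ → Matrix κ σ ℝ} {v : ℝ → σ → ℝ} {a b s L : ℝ}
    (hL : 0 ≤ L) (hF : ∀ k, MemLp (fun y ↦ F y k) 2 (volume.restrict (Icc 0 L)))
    (hv : MemLp v 2 (volume.restrict (Icc a b))) (ha : a ≤ s - L) (hb : s ≤ b) :
    (∑ k, ∑ l, ∫ y in (0 : ℝ)..L, r k * F y k l * v (s - y) l) ^ 2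
      ≤ (∑ k, r k ^ 2) * (∑ k, energy (fun y ↦ F y k) 0 L) * energy v a b := by
  simp only [mul_assoc (r _), intervalIntegral.integral_const_mul, ← Finset.mul_sum]
  calc _ ≤ (∑ k, r k ^ 2) * ∑ k, (∑ l, ∫ y in (0 : ℝ)..L, F y k l * v (s - y) l) ^ 2 :=
        Finset.sum_mul_sq_le_sq_mul_sq _ _ _
    _ ≤ (∑ k, r k ^ 2) * ∑ k, energy (fun y ↦ F y k) 0 L * energy v a b := by
        gcongr with k
        exact sq_memory_le hL (hF k) hv ha hb
    _ = _ := by rw [← Finset.sum_mul, mul_assoc]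

end Delay

section TargetState

variable {κ σ : Type*} [Fintype κ] [Fintype σ]

/-- One component of the delay representation `β(t, x)`: `c` is the transport speed `μ_j`, `L` is
the maximal delay `1 / λ`, and `r`, `r'`, `g`, `f` are the `j`-th rows of `R`, `R'`, `Ḡ`, `f̄`. -/
noncomputable def targetComponent (c L : ℝ) (r : κ → ℝ) (r' : σ → ℝ) (F : ℝ → Matrix κ σ ℝ)
    (g : ℝ → κ → ℝ) (f : ℝ → σ → ℝ) (ζ : ℝ → κ → ℝ) (v : ℝ → σ → ℝ) (t x : ℝ) : ℝ :=
  (∑ k, r k * ζ (t - (1 - x) / c) k)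
    + (∑ k, r' k * v (t - (1 - x) / c) k)
    - (∑ k, ∑ l, ∫ y in (0 : ℝ)..L, r k * F y k l * v (t - y - (1 - x) / c) l)
    + (∑ k, ∫ ν in (0 : ℝ)..(1 - x) / c, g (x + c * ν) k * ζ (t - ν) k)
    + (∑ k, ∫ ν in (0 : ℝ)..(1 - x) / c, f (x + c * ν) k * v (t - ν) k)

/-- The gain of `targetComponent` from the energies of `ζ` and `v` to the squared `L²` norm in `x`.
The factor `5` is the number of terms in `targetComponent`. -/
noncomputable def targetGain (c L : ℝ) (r : κ → ℝ) (r' : σ → ℝ) (F : ℝ → Matrix κ σ ℝ)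
    (g : ℝ → κ → ℝ) (f : ℝ → σ → ℝ) : ℝ :=
  5 * (c * ((∑ k, r k ^ 2) + ∑ k, r' k ^ 2)
    + (∑ k, r k ^ 2) * (∑ k, energy (fun y ↦ F y k) 0 L)
    + c⁻¹ * (energy g 0 1 + energy f 0 1))

lemma targetGain_nonneg {c L : ℝ} (hc : 0 < c) (hL : 0 ≤ L) (r : κ → ℝ) (r' : σ → ℝ)
    (F : ℝ → Matrix κ σ ℝ) (g : ℝ → κ → ℝ) (f : ℝ → σ → ℝ) :
    0 ≤ targetGain c L r r' F g f := by
  have hF : 0 ≤ ∑ k, energy (fun y ↦ F y k) 0 L := Finset.sum_nonneg fun k _ ↦ energy_nonneg _ hL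
  have hg : 0 ≤ energy g 0 1 := energy_nonneg g zero_le_one
  have hf : 0 ≤ energy f 0 1 := energy_nonneg f zero_le_one
  unfold targetGain
  positivity

lemma sq_add_add_sub_add_add_le (a b c d e : ℝ) :
    (a + b - c + d + e) ^ 2 ≤ 5 * (a ^ 2 + b ^ 2 + c ^ 2 + d ^ 2 + e ^ 2) := by
  simpa [Fin.sum_univ_five, ← sub_eq_add_neg] using
    sq_sum_le_card_mul_sum_sq (s := Finset.univ) (f := ![a, b, -c, d, e])

variable {c L a b t : ℝ} {r : κ → ℝ} {r' : σ → ℝ} {F : ℝ → Matrix κ σ ℝ} {g : ℝ → κ → ℝ}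
  {f : ℝ → σ → ℝ} {ζ : ℝ → κ → ℝ} {v : ℝ → σ → ℝ}

lemma sq_targetComponent_le (hc : 0 < c) (hL : 0 ≤ L)
    (hF : ∀ k, MemLp (fun y ↦ F y k) 2 (volume.restrict (Icc 0 L)))
    (hg : MemLp g 2 (volume.restrict (Icc 0 1))) (hf : MemLp f 2 (volume.restrict (Icc 0 1)))
    (ha : a ≤ t - 1 / c) (hζ : MemLp ζ 2 (volume.restrict (Icc a t)))
    (hb : b ≤ t - 1 / c - L) (hv : MemLp v 2 (volume.restrict (Icc b t)))
    {x : ℝ} (hx : x ∈ Icc (0 : ℝ) 1) :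
    targetComponent c L r r' F g f ζ v t x ^ 2
      ≤ 5 * ((∑ k, r k ^ 2) * (∑ k, ζ (t - (1 - x) / c) k ^ 2)
        + (∑ k, r' k ^ 2) * (∑ k, v (t - (1 - x) / c) k ^ 2)
        + ((∑ k, r k ^ 2) * (∑ k, energy (fun y ↦ F y k) 0 L) * energy v b t
          + c⁻¹ * energy g 0 1 * energy ζ a t + c⁻¹ * energy f 0 1 * energy v b t)) := by
  have delay_nonneg : 0 ≤ (1 - x) / c := div_nonneg (sub_nonneg.mpr hx.2) hc.le
  have delay_le : (1 - x) / c ≤ 1 / c := by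
    gcongr
    exact sub_le_self 1 hx.1
  refine (sq_add_add_sub_add_add_le _ _ _ _ _).trans ?_
  rw [← add_assoc, ← add_assoc]
  gcongr 5 * (?_ + ?_ + ?_ + ?_ + ?_)
  · exact Finset.sum_mul_sq_le_sq_mul_sq _ _ _
  · exact Finset.sum_mul_sq_le_sq_mul_sq _ _ _
  · simp only [sub_right_comm t _ ((1 - x) / c)]
    exact sq_sum_mul_memory_le hL hF hv (by linarith) (by linarith)
  · exact sq_memory_along_characteristic_le hc hx hg hζ ha
  · exact sq_memory_along_characteristic_le hc hx hf hv (by linarith)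

lemma integral_delay_add_delay_le {A B : ℝ} (hA : 0 ≤ A) (hB : 0 ≤ B) (M : ℝ) (hc : 0 < c)
    (ha : a ≤ t - 1 / c) (hζ : MemLp ζ 2 (volume.restrict (Icc a t)))
    (hb : b ≤ t - 1 / c) (hv : MemLp v 2 (volume.restrict (Icc b t))) :
    ∫ x in (0 : ℝ)..1, A * (∑ k, ζ (t - (1 - x) / c) k ^ 2)
        + B * (∑ k, v (t - (1 - x) / c) k ^ 2) + M
      ≤ A * (c * energy ζ a t) + B * (c * energy v b t) + M := by
  have hζx := (intervalIntegrable_sum_sq_delay hc ha hζ).const_mul A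
  have hvx := (intervalIntegrable_sum_sq_delay hc hb hv).const_mul B
  calc _ = A * energy (fun x ↦ ζ (t - (1 - x) / c)) 0 1
          + B * energy (fun x ↦ v (t - (1 - x) / c)) 0 1 + M := by
        rw [intervalIntegral.integral_add (hζx.add hvx) intervalIntegrable_const,
          intervalIntegral.integral_add hζx hvx, intervalIntegral.integral_const_mul,
          intervalIntegral.integral_const_mul, intervalIntegral.integral_const, sub_zero, one_smul]
        rfl
    _ ≤ A * (c * energy ζ a t) + B * (c * energy v b t) + M := by
        gcongr
        · exact energy_delay_le hc ha hζ
        · exact energy_delay_le hc hb hv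

lemma le_targetGain_mul {Z V : ℝ} (hc : 0 < c) (hL : 0 ≤ L) (hZ : 0 ≤ Z) (hV : 0 ≤ V)
    (r : κ → ℝ) (r' : σ → ℝ) (F : ℝ → Matrix κ σ ℝ) (g : ℝ → κ → ℝ) (f : ℝ → σ → ℝ) :
    5 * ((∑ k, r k ^ 2) * (c * Z) + (∑ k, r' k ^ 2) * (c * V)
        + ((∑ k, r k ^ 2) * (∑ k, energy (fun y ↦ F y k) 0 L) * V
          + c⁻¹ * energy g 0 1 * Z + c⁻¹ * energy f 0 1 * V))
      ≤ targetGain c L r r' F g f * (Z + V) := by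
  have hF : 0 ≤ ∑ k, energy (fun y ↦ F y k) 0 L := Finset.sum_nonneg fun k _ ↦ energy_nonneg _ hL
  have hg : 0 ≤ energy g 0 1 := energy_nonneg g zero_le_one
  have hf : 0 ≤ energy f 0 1 := energy_nonneg f zero_le_one
  have hZ_le : Z ≤ Z + V := le_add_of_nonneg_right hV
  have hV_le : V ≤ Z + V := le_add_of_nonneg_left hZ
  calc _ ≤ 5 * ((∑ k, r k ^ 2) * (c * (Z + V)) + (∑ k, r' k ^ 2) * (c * (Z + V))
          + ((∑ k, r k ^ 2) * (∑ k, energy (fun y ↦ F y k) 0 L) * (Z + V)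
            + c⁻¹ * energy g 0 1 * (Z + V) + c⁻¹ * energy f 0 1 * (Z + V))) := by
        gcongr
    _ = targetGain c L r r' F g f * (Z + V) := by
        rw [targetGain]
        ring

lemma exists_majorant_sq_targetComponent (hc : 0 < c) (hL : 0 ≤ L)
    (hF : ∀ k, MemLp (fun y ↦ F y k) 2 (volume.restrict (Icc 0 L)))
    (hg : MemLp g 2 (volume.restrict (Icc 0 1))) (hf : MemLp f 2 (volume.restrict (Icc 0 1)))
    (ha : a ≤ t - 1 / c) (hζ : MemLp ζ 2 (volume.restrict (Icc a t)))
    (hb : b ≤ t - 1 / c - L) (hv : MemLp v 2 (volume.restrict (Icc b t))) :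
    ∃ D : ℝ → ℝ, IntervalIntegrable D volume 0 1 ∧
      (∀ x ∈ Icc (0 : ℝ) 1, targetComponent c L r r' F g f ζ v t x ^ 2 ≤ D x) ∧
      ∫ x in (0 : ℝ)..1, D x ≤ targetGain c L r r' F g f * (energy ζ a t + energy v b t) := by
  have hT : 0 < 1 / c := one_div_pos.mpr hc
  have hb' : b ≤ t - 1 / c := by linarith
  have integrable := ((intervalIntegrable_sum_sq_delay hc ha hζ).const_mul (∑ k, r k ^ 2)).add
    ((intervalIntegrable_sum_sq_delay hc hb' hv).const_mul (∑ k, r' k ^ 2))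
  refine ⟨_, (integrable.add intervalIntegrable_const).const_mul 5,
    fun x hx ↦ sq_targetComponent_le hc hL hF hg hf ha hζ hb hv hx, ?_⟩
  rw [intervalIntegral.integral_const_mul]
  calc _ ≤ _ := mul_le_mul_of_nonneg_left (integral_delay_add_delay_le (by positivity)
        (by positivity) _ hc ha hζ hb' hv) (by norm_num)
    _ ≤ _ := le_targetGain_mul hc hL (energy_nonneg ζ (by linarith))
        (energy_nonneg v (by linarith)) r r' F g f

end TargetState

theorem stmt7_general {ι κ σ : Type*} [Fintype ι] [Fintype κ] [Fintype σ]
    (μ : ι → ℝ) (μ₀ : ℝ) (hμ₀ : 0 < μ₀) (hμ : ∀ j, μ₀ ≤ μ j) (L : ℝ) (hL : 0 ≤ L)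
    (R : Matrix ι κ ℝ) (R' : Matrix ι σ ℝ)
    (F : ℝ → Matrix κ σ ℝ) (hF : ∀ k, MemLp (fun y ↦ F y k) 2 (volume.restrict (Icc 0 L)))
    (Gb : ℝ → Matrix ι κ ℝ) (hGb : ∀ j, MemLp (fun y ↦ Gb y j) 2 (volume.restrict (Icc 0 1)))
    (fb : ℝ → Matrix ι σ ℝ) (hfb : ∀ j, MemLp (fun y ↦ fb y j) 2 (volume.restrict (Icc 0 1))) :
    ∃ K : ℝ, 0 < K ∧ ∀ (ζ : ℝ → κ → ℝ) (v : ℝ → σ → ℝ) (t : ℝ),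
      MemLp ζ 2 (volume.restrict (Icc (t - 1 / μ₀) t)) →
      MemLp v 2 (volume.restrict (Icc (t - 1 / μ₀ - L) t)) →
      ∫ x in (0 : ℝ)..1,
          ∑ j, targetComponent (μ j) L (R j) (R' j) F (Gb · j) (fb · j) ζ v t x ^ 2
        ≤ K * (energy ζ (t - 1 / μ₀) t + energy v (t - 1 / μ₀ - L) t) := by
  let gain (j : ι) : ℝ := targetGain (μ j) L (R j) (R' j) F (Gb · j) (fb · j)
  have hμpos (j : ι) : 0 < μ j := hμ₀.trans_le (hμ j)
  have hgain : 0 ≤ ∑ j, gain j :=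
    Finset.sum_nonneg fun j _ ↦ targetGain_nonneg (hμpos j) hL _ _ _ _ _
  refine ⟨∑ j, gain j + 1, by linarith, fun ζ v t hζ hv ↦ ?_⟩
  have window (j : ι) : 1 / μ j ≤ 1 / μ₀ := one_div_le_one_div_of_le hμ₀ (hμ j)
  choose D hD_int hD_le hD_energy using fun j ↦ exists_majorant_sq_targetComponent
    (r := R j) (r' := R' j) (hμpos j) hL hF (hGb j) (hfb j)
    (sub_le_sub_left (window j) t) hζ (sub_le_sub_right (sub_le_sub_left (window j) t) L) hv
  refine (integral_sum_le_sum_of_le zero_le_one (fun _ _ ↦ sq_nonneg _) hD_le hD_int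
    hD_energy).trans ?_
  have hT : 0 < 1 / μ₀ := one_div_pos.mpr hμ₀
  rw [← Finset.sum_mul]
  exact mul_le_mul_of_nonneg_right (le_add_of_nonneg_right zero_le_one)
    (add_nonneg (energy_nonneg ζ (by linarith)) (energy_nonneg v (by linarith)))

/-- the input-to-state stability estimate of Property 2 of the
paper. For the explicit delay representation `β` (equation (15)) of the
leftward-traveling target state in terms of the tracked output `ζ` and the
downstream boundary trace `v`, the spatial `L²`-norm of `β(t,·)` is bounded by
the recent `L²`-norms of `ζ` and `v`, with a constant independent of `ζ`, `v`
and `t`. -/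
theorem stmt7 (n m p : ℕ) (hn : 1 ≤ n) (hm : 1 ≤ m) (hp : 1 ≤ p)
    (μ : Fin m → ℝ) (hμpos : ∀ j, 0 < μ j) (hμmono : StrictMono μ)
    (lam : ℝ) (hlam : 0 < lam)
    (R : Matrix (Fin m) (Fin n) ℝ) (R' : Matrix (Fin m) (Fin p) ℝ)
    (F : ℝ → Matrix (Fin n) (Fin p) ℝ) (hF : ContinuousOn F (Icc (0:ℝ) (1 / lam)))
    (Gb : ℝ → Matrix (Fin m) (Fin n) ℝ) (hGb : ContinuousOn Gb (Icc (0:ℝ) 1))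
    (fb : ℝ → Matrix (Fin m) (Fin p) ℝ) (hfb : ContinuousOn fb (Icc (0:ℝ) 1)) :
    ∃ K : ℝ, 0 < K ∧
      ∀ ζ : ℝ → Fin n → ℝ, ∀ v : ℝ → Fin p → ℝ,
        Continuous ζ → Continuous v →
        ∀ β : ℝ → ℝ → Fin m → ℝ,
        (∀ (t x : ℝ) (j : Fin m), β t x j =
            (∑ k, R j k * ζ (t - (1 - x) / μ j) k)
            + (∑ k, R' j k * v (t - (1 - x) / μ j) k)
            - (∑ k, ∑ ℓ, ∫ y in (0:ℝ)..(1 / lam),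
                R j k * F y k ℓ * v (t - y - (1 - x) / μ j) ℓ)
            + (∑ k, ∫ ν in (0:ℝ)..((1 - x) / μ j),
                Gb (x + μ j * ν) j k * ζ (t - ν) k)
            + (∑ k, ∫ ν in (0:ℝ)..((1 - x) / μ j),
                fb (x + μ j * ν) j k * v (t - ν) k)) →
        ∀ t : ℝ,
          (∫ x in (0:ℝ)..1, ∑ j, (β t x j) ^ 2)
            ≤ K * ((∫ s in (t - 1 / μ ⟨0, hm⟩)..t, ∑ k, (ζ s k) ^ 2)
              + ∫ s in (t - 1 / μ ⟨0, hm⟩ - 1 / lam)..t, ∑ k, (v s k) ^ 2) := by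
  obtain ⟨K, hK, bound⟩ := stmt7_general μ (μ ⟨0, hm⟩) (hμpos _)
    (fun _ ↦ hμmono.monotone (Fin.mk_le_of_le_val (Nat.zero_le _))) (1 / lam)
    (one_div_nonneg.mpr hlam.le) R R'
    F (fun k ↦ memLp_restrict_of_continuousOn isCompact_Icc
      ((continuous_apply k).comp_continuousOn hF))
    Gb (fun j ↦ memLp_restrict_of_continuousOn isCompact_Icc
      ((continuous_apply j).comp_continuousOn hGb))
    fb (fun j ↦ memLp_restrict_of_continuousOn isCompact_Icc
      ((continuous_apply j).comp_continuousOn hfb))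
  refine ⟨K, hK, fun ζ v hζ hv β hβ t ↦ ?_⟩
  simp only [hβ]
  exact bound ζ v t (memLp_restrict_of_continuousOn isCompact_Icc hζ.continuousOn)
    (memLp_restrict_of_continuousOn isCompact_Icc hv.continuousOn)
end

section
/- Let m ≥ 1, τ > 0, K ∈ ℕ, let A_1, …, A_K ∈ M_m(ℝ), let d_1, …, d_K ∈ (0, τ], let g : [0, τ] → M_m(ℝ) be continuous, and let a < b be real numbers. Suppose p : [a − τ, b] → ℝᵐ is continuous, p(s) = 0 for all s ∈ [a − τ, a], and for all s ∈ (a, b]: p(s) = Σ_{k=1}^K A_k p(s − d_k) + ∫_0^τ g(ν) p(s − ν) dν. Then p(s) = 0 for all s ∈ [a, b]. -/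
open Matrix Set

/-!
In the exponentially weighted supremum norm `sup ‖exp (-r * s) • p s‖` the delay operator is bounded
by the Laplace transform at `r` of the total variation of its kernel, a finite measure carried by
`(0, τ]`. That measure has no mass at `0`, so its Laplace transform tends to `0` as `r → ∞`; for
large `r` the delay operator is therefore a strict contraction, and its only fixed point is `0`.
-/

open MeasureTheory Filter Topology
open scoped ENNReal NNReal

section RenewalInequality

variable {μ : Measure ℝ}

lemma tendsto_lintegral_exp_neg_mul_atTop [IsFiniteMeasure μ] (hμ : ∀ᵐ ν ∂μ, 0 < ν) :
    Tendsto (fun r : ℝ ↦ ∫⁻ ν, ENNReal.ofReal (Real.exp (-(r * ν))) ∂μ) atTop (𝓝 0) := by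
  rw [← lintegral_zero (μ := μ)]
  refine tendsto_lintegral_filter_of_dominated_convergence (fun _ ↦ 1)
    (.of_forall fun r ↦ by fun_prop) ?_ (by simp) ?_
  · filter_upwards [eventually_ge_atTop 0] with r hr
    filter_upwards [hμ] with ν hν
    exact ENNReal.ofReal_le_one.2 (Real.exp_le_one_iff.2 (neg_nonpos.2 (by positivity)))
  · filter_upwards [hμ] with ν hν
    rw [← ENNReal.ofReal_zero]
    exact ENNReal.tendsto_ofReal <|
      Real.tendsto_exp_neg_atTop_nhds_zero.comp (tendsto_id.atTop_mul_const hν)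

variable {τ a b : ℝ} {u : ℝ → ℝ≥0∞}

lemma le_mul_exp_of_le_lintegral_sub {r : ℝ} {M : ℝ≥0∞}
    (hμ : ∀ᵐ ν ∂μ, ν ∈ Ioc 0 τ) (hzero : ∀ s ∈ Icc (a - τ) a, u s = 0)
    (hle : ∀ s ∈ Ioc a b, u s ≤ ∫⁻ ν, u (s - ν) ∂μ)
    (hM : ∀ s ∈ Icc (a - τ) b, u s ≤ M * ENNReal.ofReal (Real.exp (r * s))) :
    ∀ s ∈ Icc (a - τ) b,
      u s ≤ (∫⁻ ν, ENNReal.ofReal (Real.exp (-(r * ν))) ∂μ) * M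
        * ENNReal.ofReal (Real.exp (r * s)) := by
  intro s hs
  rcases le_or_gt s a with hsa | has
  · simp only [hzero s ⟨hs.1, hsa⟩, zero_le]
  have hexp (ν : ℝ) : ENNReal.ofReal (Real.exp (r * (s - ν))) =
      ENNReal.ofReal (Real.exp (r * s)) * ENNReal.ofReal (Real.exp (-(r * ν))) := by
    rw [← ENNReal.ofReal_mul (Real.exp_nonneg _), ← Real.exp_add]
    ring_nf
  calc
    u s ≤ ∫⁻ ν, u (s - ν) ∂μ := hle s ⟨has, hs.2⟩
    _ ≤ ∫⁻ ν, M * ENNReal.ofReal (Real.exp (r * (s - ν))) ∂μ := by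
      refine lintegral_mono_ae ?_
      filter_upwards [hμ] with ν hν
      exact hM (s - ν) ⟨by linarith [hν.2], by linarith [hν.1, hs.2]⟩
    _ = M * ENNReal.ofReal (Real.exp (r * s))
          * ∫⁻ ν, ENNReal.ofReal (Real.exp (-(r * ν))) ∂μ := by
      simp only [hexp, ← mul_assoc]
      exact lintegral_const_mul _ (by fun_prop)
    _ = _ := by ring

lemma le_mul_exp_neg_mul_exp {r t s : ℝ} (hr : 0 ≤ r) (hts : t ≤ s) (C : ℝ≥0∞) :
    C ≤ C * ENNReal.ofReal (Real.exp (-(r * t))) * ENNReal.ofReal (Real.exp (r * s)) := by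
  have hweight : 1 ≤ Real.exp (-(r * t)) * Real.exp (r * s) := by
    rw [← Real.exp_add, Real.one_le_exp_iff]
    linarith [mul_le_mul_of_nonneg_left hts hr]
  rw [mul_assoc, ← ENNReal.ofReal_mul (Real.exp_nonneg _)]
  exact le_mul_of_one_le_right' (ENNReal.one_le_ofReal.2 hweight)

lemma eq_zero_of_le_lintegral_sub [IsFiniteMeasure μ] {C : ℝ≥0∞} (hC : C ≠ ∞)
    (hμ : ∀ᵐ ν ∂μ, ν ∈ Ioc 0 τ) (hzero : ∀ s ∈ Icc (a - τ) a, u s = 0)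
    (hle : ∀ s ∈ Ioc a b, u s ≤ ∫⁻ ν, u (s - ν) ∂μ)
    (hbdd : ∀ s ∈ Icc (a - τ) b, u s ≤ C) :
    ∀ s ∈ Icc (a - τ) b, u s = 0 := by
  obtain ⟨r, hr, hcontr⟩ : ∃ r : ℝ, 0 ≤ r ∧
      ∫⁻ ν, ENNReal.ofReal (Real.exp (-(r * ν))) ∂μ < 1 :=
    ((eventually_ge_atTop 0).and ((tendsto_lintegral_exp_neg_mul_atTop
      (hμ.mono fun _ hν ↦ hν.1)).eventually_lt_const zero_lt_one)).exists
  set q := ∫⁻ ν, ENNReal.ofReal (Real.exp (-(r * ν))) ∂μ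
  set M := C * ENNReal.ofReal (Real.exp (-(r * (a - τ))))
  have hM : M ≠ ∞ := ENNReal.mul_ne_top hC ENNReal.ofReal_ne_top
  have hiter (n : ℕ) :
      ∀ s ∈ Icc (a - τ) b, u s ≤ q ^ n * M * ENNReal.ofReal (Real.exp (r * s)) := by
    induction n with
    | zero =>
      intro s hs
      rw [pow_zero, one_mul]
      exact (hbdd s hs).trans (le_mul_exp_neg_mul_exp hr hs.1 C)
    | succ n ih =>
      simpa only [pow_succ', mul_assoc] using le_mul_exp_of_le_lintegral_sub hμ hzero hle ih
  intro s hs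
  have hlim : Tendsto (fun n : ℕ ↦ q ^ n * M * ENNReal.ofReal (Real.exp (r * s))) atTop (𝓝 0) := by
    simpa only [zero_mul, mul_assoc] using ENNReal.Tendsto.mul_const
      (ENNReal.tendsto_pow_atTop_nhds_zero_of_lt_one hcontr)
      (Or.inr (ENNReal.mul_ne_top hM ENNReal.ofReal_ne_top))
  exact nonpos_iff_eq_zero.1 (ge_of_tendsto' hlim fun n ↦ hiter n s hs)

end RenewalInequality

section DelayMeasure

variable {ι : Type*} [Fintype ι] {α : ι → ℝ≥0} {d : ι → ℝ} {κ : ℝ → ℝ≥0} {τ : ℝ}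

/-- The measure on the set of delays with an atom of mass `α k` at each discrete delay `d k` and
with density `κ` on the window `(0, τ]` of the distributed delay. It puts discrete and distributed
delays on the same footing: both become integration against one measure. -/
noncomputable def delayMeasure (α : ι → ℝ≥0) (d : ι → ℝ) (κ : ℝ → ℝ≥0) (τ : ℝ) : Measure ℝ :=
  ∑ k, α k • Measure.dirac (d k)
    + (volume.restrict (Ioc 0 τ)).withDensity fun ν ↦ (κ ν : ℝ≥0∞)

lemma lintegral_delayMeasure (hκ : AEMeasurable κ (volume.restrict (Ioc 0 τ))) (f : ℝ → ℝ≥0∞) :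
    ∫⁻ ν, f ν ∂delayMeasure α d κ τ = ∑ k, α k * f (d k) + ∫⁻ ν in Ioc 0 τ, κ ν * f ν := by
  rw [delayMeasure, lintegral_add_measure, lintegral_finsetSum_measure,
    lintegral_withDensity_eq_lintegral_mul_non_measurable₀ _ hκ.coe_nnreal_ennreal
      (.of_forall fun _ ↦ ENNReal.coe_lt_top)]
  simp only [lintegral_smul_measure, lintegral_dirac, Pi.mul_apply, ENNReal.smul_def, smul_eq_mul]

lemma isFiniteMeasure_delayMeasure (hκ : AEMeasurable κ (volume.restrict (Ioc 0 τ)))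
    (hκ_fin : ∫⁻ ν in Ioc 0 τ, κ ν ≠ ∞) : IsFiniteMeasure (delayMeasure α d κ τ) where
  measure_univ_lt_top := by
    rw [← lintegral_one, lintegral_delayMeasure hκ]
    simp only [mul_one]
    exact ENNReal.add_lt_top.2 ⟨ENNReal.sum_lt_top.2 fun _ _ ↦ ENNReal.coe_lt_top, hκ_fin.lt_top⟩

lemma ae_delayMeasure_mem_Ioc (hd : ∀ k, d k ∈ Ioc 0 τ) :
    ∀ᵐ ν ∂delayMeasure α d κ τ, ν ∈ Ioc 0 τ := by
  refine ae_add_measure_iff.2 ⟨?_, ?_⟩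
  · exact ae_finsetSum_measure_iff.2 fun k _ ↦
      Measure.ae_smul_measure ((ae_dirac_iff measurableSet_Ioc).2 (hd k)) _
  · exact withDensity_absolutelyContinuous _ _ (ae_restrict_mem measurableSet_Ioc)

end DelayMeasure

section DelayEquation

variable {E ι : Type*} [NormedAddCommGroup E] [NormedSpace ℝ E] [Fintype ι]

lemma enorm_delay_sum_add_integral_le {A : ι → E →L[ℝ] E} {d : ι → ℝ} {g : ℝ → E →L[ℝ] E}
    {τ : ℝ} (hτ : 0 ≤ τ) (hg : AEStronglyMeasurable g (volume.restrict (Ioc 0 τ)))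
    (p : ℝ → E) (s : ℝ) :
    ‖∑ k, A k (p (s - d k)) + ∫ ν in (0 : ℝ)..τ, g ν (p (s - ν))‖ₑ ≤
      ∫⁻ ν, ‖p (s - ν)‖ₑ ∂delayMeasure (fun k ↦ ‖A k‖₊) d (fun ν ↦ ‖g ν‖₊) τ := by
  rw [lintegral_delayMeasure hg.nnnorm.aemeasurable, intervalIntegral.integral_of_le hτ]
  refine (enorm_add_le _ _).trans (add_le_add ?_ ?_)
  · exact (enorm_sum_le _ _).trans (Finset.sum_le_sum fun k _ ↦ (A k).le_opENorm _)
  · exact (enorm_integral_le_lintegral_enorm _).trans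
      (lintegral_mono fun ν ↦ (g ν).le_opENorm _)

theorem stmt10_general [CompleteSpace E] {τ a b : ℝ} (hτ : 0 ≤ τ) {A : ι → E →L[ℝ] E} {d : ι → ℝ}
    (hd : ∀ k, d k ∈ Ioc 0 τ) {g : ℝ → E →L[ℝ] E} (hg : IntervalIntegrable g volume 0 τ)
    {p : ℝ → E} (hp : AEStronglyMeasurable p (volume.restrict (Icc (a - τ) b)))
    (hbdd : ∃ C, ∀ s ∈ Icc (a - τ) b, ‖p s‖ ≤ C) (hzero : ∀ s ∈ Icc (a - τ) a, p s = 0)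
    (heq : ∀ s ∈ Ioc a b,
      p s = ∑ k, A k (p (s - d k)) + ∫ ν in (0 : ℝ)..τ, g ν (p (s - ν))) :
    ∀ s ∈ Icc (a - τ) b, p s = 0 := by
  obtain ⟨C, hC⟩ := hbdd
  have hg' : IntegrableOn g (Ioc 0 τ) := (intervalIntegrable_iff_integrableOn_Ioc_of_le hτ).1 hg
  have hfin := isFiniteMeasure_delayMeasure (α := fun k ↦ ‖A k‖₊) (d := d)
    hg'.1.nnnorm.aemeasurable hg'.2.ne
  have hnorm : ∀ s ∈ Icc (a - τ) b, ‖p s‖ₑ = 0 :=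
    eq_zero_of_le_lintegral_sub ENNReal.ofReal_ne_top (ae_delayMeasure_mem_Ioc hd)
      (fun s hs ↦ enorm_eq_zero.2 (hzero s hs))
      (fun s hs ↦ (congrArg enorm (heq s hs)).trans_le
        (enorm_delay_sum_add_integral_le hτ hg'.1 p s))
      (fun s hs ↦ (ofReal_norm (p s)).symm.trans_le (ENNReal.ofReal_le_ofReal (hC s hs)))
  exact fun s hs ↦ enorm_eq_zero.1 (hnorm s hs)

end DelayEquation

/-- uniqueness of solutions for the integral difference equation
(discrete delays plus a Volterra distributed-delay term) underlying the
time-delay representation of the boundary traces of the hyperbolic subsystems: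
a continuous solution that vanishes on the initial interval `[a−τ, a]` vanishes
on all of `[a, b]`. -/
theorem stmt10 (m : ℕ) (hm : 1 ≤ m) (τ : ℝ) (hτ : 0 < τ) (K : ℕ)
    (A : Fin K → Matrix (Fin m) (Fin m) ℝ)
    (d : Fin K → ℝ) (hd : ∀ k, d k ∈ Ioc (0:ℝ) τ)
    (g : ℝ → Matrix (Fin m) (Fin m) ℝ) (hg : ContinuousOn g (Icc (0:ℝ) τ))
    (a b : ℝ) (hab : a < b)
    (p : ℝ → Fin m → ℝ) (hp : ContinuousOn p (Icc (a - τ) b))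
    (hzero : ∀ s ∈ Icc (a - τ) a, p s = 0)
    (heq : ∀ s ∈ Ioc a b,
      p s = (∑ k, A k *ᵥ p (s - d k)) + ∫ ν in (0:ℝ)..τ, g ν *ᵥ p (s - ν)) :
    ∀ s ∈ Icc a b, p s = 0 := by
  let T : Matrix (Fin m) (Fin m) ℝ ≃ₗ[ℝ] ((Fin m → ℝ) →L[ℝ] (Fin m → ℝ)) :=
    Matrix.toLin'.trans LinearMap.toContinuousLinearMap
  have hTg : IntervalIntegrable (fun ν ↦ T (g ν)) volume 0 τ :=
    (T.toLinearMap.continuous_of_finiteDimensional.comp_continuousOn hg).intervalIntegrable_of_Icc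
      hτ.le
  exact fun s hs ↦ stmt10_general hτ.le (A := fun k ↦ T (A k)) hd hTg
    (hp.aestronglyMeasurable measurableSet_Icc) (isCompact_Icc.exists_bound_of_continuousOn hp)
    hzero heq s ⟨by linarith [hs.1], hs.2⟩
end

section
/- Let m ≥ 1, τ > 0, K ∈ ℕ, let A_1, …, A_K ∈ M_m(ℝ), let d_1, …, d_K ∈ (0, τ], and let g : [0, τ] → M_m(ℝ) be continuous. Let h : ℝ → ℝᵐ be continuous and let x : ℝ → ℝᵐ be continuous satisfying, for all s ∈ ℝ: x(s) = Σ_{k=1}^K A_k x(s − d_k) + ∫_0^τ g(ν) x(s − ν) dν + h(s). Fix D > 0 and t ∈ ℝ, and suppose P : [t − D − τ, t] → ℝᵐ is continuous and satisfies: P(s) = x(s + D) for all s ∈ [t − D − τ, t − D], and P(s) = Σ_{k=1}^K A_k P(s − d_k) + ∫_0^τ g(ν) P(s − ν) dν + h(s + D) for all s ∈ (t − D, t]. Then P(s) = x(s + D) for all s ∈ [t − D − τ, t]. -/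
open Matrix Set

/-!
The predictor and the shifted state `s ↦ x (s + D)` solve the same forced equation with the same
initial data, so their difference `e` solves `e s = (L e) s` with zero initial data, where `L` is
the linear delay operator. As every delay is positive and the distributed part has no atom at `0`,
`L` becomes a contraction in the weighted norm `sup ‖e s‖ exp (-c s)` once `c` is large.
Evaluating the equation at a point where `‖e s‖ exp (-c s)` is maximal then forces `e = 0`.
-/

open Filter Topology MeasureTheory

lemma intervalIntegrable_clm_apply {𝕜 E F : Type*} [NontriviallyNormedField 𝕜]
    [NormedAddCommGroup E] [NormedSpace 𝕜 E] [NormedAddCommGroup F] [NormedSpace 𝕜 F]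
    {μ : Measure ℝ} {a b : ℝ} {φ : ℝ → E →L[𝕜] F} {f : ℝ → E}
    (hφ : IntervalIntegrable φ μ a b) (hf : ContinuousOn f (uIcc a b)) :
    IntervalIntegrable (fun ν => φ ν (f ν)) μ a b := by
  obtain ⟨C, hC⟩ := isCompact_uIcc.exists_bound_of_continuousOn hf
  have hmeas : AEStronglyMeasurable (fun ν => φ ν (f ν)) (μ.restrict (uIoc a b)) :=
    (ContinuousLinearMap.id 𝕜 (E →L[𝕜] F)).aestronglyMeasurable_comp₂
      hφ.aestronglyMeasurable_restrict_uIoc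
      ((hf.mono uIoc_subset_uIcc).aestronglyMeasurable measurableSet_uIoc)
  refine (hφ.norm.mul_const C).mono_fun' hmeas ?_
  filter_upwards [ae_restrict_mem measurableSet_uIoc] with ν hν
  exact (φ ν).le_opNorm_of_le (hC ν (uIoc_subset_uIcc hν))

lemma tendsto_exp_neg_mul_atTop_nhds_zero {r : ℝ} (hr : 0 < r) :
    Tendsto (fun c : ℝ => Real.exp (-c * r)) atTop (𝓝 0) :=
  Real.tendsto_exp_comp_nhds_zero.2 (tendsto_neg_atTop_atBot.atBot_mul_const hr)

lemma tendsto_integral_mul_exp_neg_mul_atTop {τ : ℝ} (hτ : 0 ≤ τ) {f : ℝ → ℝ}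
    (hf : IntervalIntegrable f volume 0 τ) :
    Tendsto (fun c : ℝ => ∫ ν in 0..τ, f ν * Real.exp (-c * ν)) atTop (𝓝 0) := by
  have hmeas (c : ℝ) : AEStronglyMeasurable (fun ν => f ν * Real.exp (-c * ν))
      (volume.restrict (uIoc 0 τ)) :=
    hf.aestronglyMeasurable_restrict_uIoc.mul (Continuous.aestronglyMeasurable (by fun_prop))
  have hdom {c ν : ℝ} (hc : 0 ≤ c) (hν : ν ∈ uIoc 0 τ) :
      ‖f ν * Real.exp (-c * ν)‖ ≤ ‖f ν‖ := by
    rw [uIoc_of_le hτ] at hν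
    have hexp : Real.exp (-c * ν) ≤ 1 := Real.exp_le_one_iff.2 (by nlinarith [hν.1])
    rw [norm_mul, Real.norm_of_nonneg (Real.exp_nonneg _)]
    exact mul_le_of_le_one_right (norm_nonneg _) hexp
  have hlim {ν : ℝ} (hν : ν ∈ uIoc 0 τ) :
      Tendsto (fun c : ℝ => f ν * Real.exp (-c * ν)) atTop (𝓝 0) := by
    rw [uIoc_of_le hτ] at hν
    simpa only [mul_zero] using (tendsto_exp_neg_mul_atTop_nhds_zero hν.1).const_mul (f ν)
  simpa only [intervalIntegral.integral_zero] using
    intervalIntegral.tendsto_integral_filter_of_dominated_convergence (fun ν => ‖f ν‖)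
      (.of_forall hmeas) ((eventually_ge_atTop 0).mono fun c hc => .of_forall fun ν => hdom hc)
      hf.norm (.of_forall fun ν => hlim)

section DelayEquation

variable {E ι : Type*} [NormedAddCommGroup E] [NormedSpace ℝ E] [Fintype ι]

/-- The right-hand side of the unforced integral difference equation, with pointwise delays `d k`
and kernel `g` on `[0, τ]`. It is an operator on functions `y` of time, evaluated at time `s`. -/
noncomputable def delayOperator (A : ι → E →L[ℝ] E) (d : ι → ℝ) (g : ℝ → E →L[ℝ] E) (τ : ℝ)
    (y : ℝ → E) (s : ℝ) : E :=
  (∑ k, A k (y (s - d k))) + ∫ ν in 0..τ, g ν (y (s - ν))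

/-- A bound for the norm of `delayOperator A d g τ` with respect to the weighted supremum norm
`sup ‖y s‖ exp (-c s)`. -/
noncomputable def delayGain (A : ι → E →L[ℝ] E) (d : ι → ℝ) (g : ℝ → E →L[ℝ] E) (τ c : ℝ) : ℝ :=
  (∑ k, ‖A k‖ * Real.exp (-c * d k)) + ∫ ν in 0..τ, ‖g ν‖ * Real.exp (-c * ν)

variable {A : ι → E →L[ℝ] E} {d : ι → ℝ} {g : ℝ → E →L[ℝ] E} {τ : ℝ}

lemma delayOperator_comp_add_const (y : ℝ → E) (D s : ℝ) :
    delayOperator A d g τ (fun u => y (u + D)) s = delayOperator A d g τ y (s + D) := by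
  simp only [delayOperator, add_sub_right_comm]

lemma delayOperator_sub (hτ : 0 ≤ τ) (hg : IntervalIntegrable g volume 0 τ) {y z : ℝ → E} {s : ℝ}
    (hy : ContinuousOn y (Icc (s - τ) s)) (hz : ContinuousOn z (Icc (s - τ) s)) :
    delayOperator A d g τ (y - z) s = delayOperator A d g τ y s - delayOperator A d g τ z s := by
  have hint {w : ℝ → E} (hw : ContinuousOn w (Icc (s - τ) s)) :
      IntervalIntegrable (fun ν => g ν (w (s - ν))) volume 0 τ := by
    refine intervalIntegrable_clm_apply hg (hw.comp (by fun_prop) fun ν hν => ?_)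
    rw [uIcc_of_le hτ] at hν
    exact ⟨by linarith [hν.2], by linarith [hν.1]⟩
  simp only [delayOperator, Pi.sub_apply, map_sub, Finset.sum_sub_distrib,
    intervalIntegral.integral_sub (hint hy) (hint hz)]
  abel

lemma tendsto_delayGain_atTop (hτ : 0 ≤ τ) (hd : ∀ k, 0 < d k)
    (hg : IntervalIntegrable g volume 0 τ) :
    Tendsto (delayGain A d g τ) atTop (𝓝 0) := by
  have hsum : Tendsto (fun c => ∑ k, ‖A k‖ * Real.exp (-c * d k)) atTop (𝓝 0) := by
    simpa only [mul_zero, Finset.sum_const_zero] using tendsto_finsetSum Finset.univ fun k _ =>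
      (tendsto_exp_neg_mul_atTop_nhds_zero (hd k)).const_mul ‖A k‖
  rw [← add_zero (0 : ℝ)]
  exact hsum.add (tendsto_integral_mul_exp_neg_mul_atTop hτ hg.norm)

lemma norm_delayOperator_le (hτ : 0 ≤ τ) (hd : ∀ k, d k ∈ Icc 0 τ)
    (hg : IntervalIntegrable g volume 0 τ) {y : ℝ → E} {s c M : ℝ}
    (hy : ∀ u ∈ Icc (s - τ) s, ‖y u‖ ≤ M * Real.exp (c * u)) :
    ‖delayOperator A d g τ y s‖ ≤ delayGain A d g τ c * (M * Real.exp (c * s)) := by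
  have happly (T : E →L[ℝ] E) {ν : ℝ} (hν : ν ∈ Icc 0 τ) :
      ‖T (y (s - ν))‖ ≤ ‖T‖ * Real.exp (-c * ν) * (M * Real.exp (c * s)) :=
    calc ‖T (y (s - ν))‖ ≤ ‖T‖ * (M * Real.exp (c * (s - ν))) :=
          T.le_opNorm_of_le (hy _ ⟨by linarith [hν.2], by linarith [hν.1]⟩)
      _ = ‖T‖ * Real.exp (-c * ν) * (M * Real.exp (c * s)) := by
          rw [show c * (s - ν) = -c * ν + c * s by ring, Real.exp_add]
          ring
  have hweight : IntervalIntegrable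
      (fun ν => ‖g ν‖ * Real.exp (-c * ν) * (M * Real.exp (c * s))) volume 0 τ :=
    (hg.norm.mul_continuousOn (by fun_prop)).mul_const _
  rw [delayOperator, delayGain, add_mul, Finset.sum_mul, ← intervalIntegral.integral_mul_const]
  exact norm_add_le_of_le (norm_sum_le_of_le _ fun k _ => happly (A k) (hd k))
    (intervalIntegral.norm_integral_le_of_norm_le hτ
      (.of_forall fun ν hν => happly (g ν) (Ioc_subset_Icc_self hν)) hweight)

theorem eqOn_zero_of_eqOn_delayOperator (hτ : 0 ≤ τ) (hd : ∀ k, d k ∈ Ioc 0 τ)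
    (hg : IntervalIntegrable g volume 0 τ) {a b : ℝ} {e : ℝ → E}
    (he : ContinuousOn e (Icc (a - τ) b)) (hinit : EqOn e 0 (Icc (a - τ) a))
    (heq : EqOn e (delayOperator A d g τ e) (Ioc a b)) :
    EqOn e 0 (Icc (a - τ) b) := by
  obtain ⟨c, hc⟩ : ∃ c, delayGain A d g τ c < 1 :=
    ((tendsto_delayGain_atTop hτ (fun k => (hd k).1) hg).eventually_lt_const one_pos).exists
  intro s hs
  obtain ⟨r, hr, hmax⟩ := isCompact_Icc.exists_isMaxOn ⟨s, hs⟩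
    (he.norm.mul (by fun_prop : Continuous fun u => Real.exp (-c * u)).continuousOn)
  have hbound : ∀ u ∈ Icc (a - τ) b, ‖e u‖ ≤ ‖e r‖ * Real.exp (-c * r) * Real.exp (c * u) := by
    intro u hu
    rw [← div_le_iff₀ (Real.exp_pos _), div_eq_mul_inv, ← Real.exp_neg, ← neg_mul]
    exact hmax hu
  have hr_zero : ‖e r‖ = 0 := by
    rcases le_or_gt r a with hra | har
    · rw [hinit ⟨hr.1, hra⟩, Pi.zero_apply, norm_zero]
    have hcontract : ‖e r‖ ≤ delayGain A d g τ c * ‖e r‖ := by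
      have hle := norm_delayOperator_le (A := A) hτ (fun k => Ioc_subset_Icc_self (hd k)) hg
        fun u hu => hbound u ⟨by linarith [hu.1], hu.2.trans hr.2⟩
      rwa [← heq ⟨har, hr.2⟩, mul_assoc ‖e r‖, ← Real.exp_add, neg_mul, neg_add_cancel,
        Real.exp_zero, mul_one] at hle
    nlinarith [norm_nonneg (e r)]
  simpa only [hr_zero, zero_mul, norm_le_zero_iff, Pi.zero_apply] using hbound s hs

theorem eqOn_of_eqOn_delayOperator_add (hτ : 0 ≤ τ) (hd : ∀ k, d k ∈ Ioc 0 τ)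
    (hg : IntervalIntegrable g volume 0 τ) {a b : ℝ} {f y z : ℝ → E}
    (hy : ContinuousOn y (Icc (a - τ) b)) (hz : ContinuousOn z (Icc (a - τ) b))
    (hinit : EqOn y z (Icc (a - τ) a))
    (hyeq : EqOn y (delayOperator A d g τ y + f) (Ioc a b))
    (hzeq : EqOn z (delayOperator A d g τ z + f) (Ioc a b)) :
    EqOn y z (Icc (a - τ) b) := by
  have hdiff : EqOn (y - z) (delayOperator A d g τ (y - z)) (Ioc a b) := by
    intro s hs
    have hsub : Icc (s - τ) s ⊆ Icc (a - τ) b := Icc_subset_Icc (by linarith [hs.1]) hs.2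
    rw [delayOperator_sub hτ hg (hy.mono hsub) (hz.mono hsub), Pi.sub_apply, hyeq hs, hzeq hs,
      Pi.add_apply, Pi.add_apply, add_sub_add_right_eq_sub]
  have hzero := eqOn_zero_of_eqOn_delayOperator hτ hd hg (hy.sub hz)
    (fun s hs => sub_eq_zero.2 (hinit hs)) hdiff
  exact fun s hs => sub_eq_zero.1 (hzero hs)

theorem stmt11_general [CompleteSpace E] (hτ : 0 ≤ τ) (hd : ∀ k, d k ∈ Ioc 0 τ)
    (hg : IntervalIntegrable g volume 0 τ) {h x P : ℝ → E} {D t : ℝ}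
    (hx : ContinuousOn x (Icc (t - τ) (t + D)))
    (hxeq : ∀ s ∈ Ioc t (t + D), x s = delayOperator A d g τ x s + h s)
    (hP : ContinuousOn P (Icc (t - D - τ) t))
    (hinit : ∀ s ∈ Icc (t - D - τ) (t - D), P s = x (s + D))
    (hPeq : ∀ s ∈ Ioc (t - D) t, P s = delayOperator A d g τ P s + h (s + D)) :
    ∀ s ∈ Icc (t - D - τ) t, P s = x (s + D) := by
  refine eqOn_of_eqOn_delayOperator_add hτ hd hg (f := fun s => h (s + D)) hP
    (hx.comp (by fun_prop) fun s hs => ⟨by linarith [hs.1], by linarith [hs.2]⟩) hinit hPeq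
    fun s hs => ?_
  rw [Pi.add_apply, delayOperator_comp_add_const]
  exact hxeq (s + D) ⟨by linarith [hs.1], by linarith [hs.2]⟩

end DelayEquation

/-- The linear map from matrices to continuous linear operators on `n → ℝ`, sending `M` to
`v ↦ M *ᵥ v`. It turns the matrix coefficients of the equation into operator coefficients. -/
noncomputable def mulVecCLM (n : Type*) [Fintype n] [DecidableEq n] :
    Matrix n n ℝ →ₗ[ℝ] (n → ℝ) →L[ℝ] (n → ℝ) :=
  LinearMap.toContinuousLinearMap.toLinearMap ∘ₗ Matrix.toLin'.toLinearMap

lemma continuous_mulVecCLM (n : Type*) [Fintype n] [DecidableEq n] : Continuous (mulVecCLM n) :=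
  (mulVecCLM n).continuous_of_finiteDimensional

/-- exactness of the state predictions of Property 3 of the
paper. If `x` solves the forced integral difference equation (the time-delay
representation of a boundary trace) and the predictor `P` is initialized with
the exact `D`-shifted values of `x` on `[t−D−τ, t−D]` and satisfies the same
(shifted) equation on `(t−D, t]`, then `P(s) = x(s+D)` on all of `[t−D−τ, t]`. -/
theorem stmt11 (m : ℕ) (hm : 1 ≤ m) (τ : ℝ) (hτ : 0 < τ) (K : ℕ)
    (A : Fin K → Matrix (Fin m) (Fin m) ℝ)
    (d : Fin K → ℝ) (hd : ∀ k, d k ∈ Ioc (0:ℝ) τ)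
    (g : ℝ → Matrix (Fin m) (Fin m) ℝ) (hg : ContinuousOn g (Icc (0:ℝ) τ))
    (h : ℝ → Fin m → ℝ) (hh : Continuous h)
    (x : ℝ → Fin m → ℝ) (hx : Continuous x)
    (hxeq : ∀ s : ℝ,
      x s = (∑ k, A k *ᵥ x (s - d k)) + (∫ ν in (0:ℝ)..τ, g ν *ᵥ x (s - ν)) + h s)
    (D : ℝ) (hD : 0 < D) (t : ℝ)
    (P : ℝ → Fin m → ℝ) (hP : ContinuousOn P (Icc (t - D - τ) t))
    (hinit : ∀ s ∈ Icc (t - D - τ) (t - D), P s = x (s + D))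
    (hPeq : ∀ s ∈ Ioc (t - D) t,
      P s = (∑ k, A k *ᵥ P (s - d k)) + (∫ ν in (0:ℝ)..τ, g ν *ᵥ P (s - ν))
        + h (s + D)) :
    ∀ s ∈ Icc (t - D - τ) t, P s = x (s + D) :=
  stmt11_general (A := fun k => mulVecCLM (Fin m) (A k)) hτ.le hd
    (((continuous_mulVecCLM _).comp_continuousOn hg).intervalIntegrable_of_Icc hτ.le)
    hx.continuousOn (fun s _ => hxeq s) hP hinit hPeq
end
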